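/- For all positive integers m, n and every real number c with 0 < c < 1, the Hausdorff dimension of the set DI_{m,n}(c) of c-Dirichlet improvable real m×n matrices, viewed as a subset of M_{m,n}(ℝ) ≅ ℝ^{mn} with the supremum-norm metric, is strictly smaller than mn. -/

import Mathlib

/-!
With `N = τ ^ m`, a matrix `Y` violates the `c`-improved Dirichlet inequality at time `τ` when the lattice
`diag(τⁿ, …, τ⁻ᵐ) {(Y q - p, q)}` has no nonzero vector in the box with half-sides `c` (first `m`
coordinates) and `1`; this is `Av Y τ c 1`. The set in question is contained in a countable union of sets
`DIfrom m n c T` of points with no violation from time `T` on. Such a set is covered by repeated subdivision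
of cubes. A cube with centre `Y` and side `τ ^ (-(m + n))` carries a number `a ≥ 1`, its distortion, such
that the lattice of `Y` at time `τ` has no nonzero vector of sup norm less than `1 / a`, and the weight
`side ^ s * a ^ γ`, where `s = m n - β γ`. The total weight never has to increase under subdivision
(`Splits`), so that the `s`-dimensional Hausdorff measure stays finite
(`hausdorffMeasure_le_of_subdivide`), and `s < m n`.

* If `a` is bounded (`splits_of_le`), a definite part of the cube is lost. Near every unimodular lattice
  there is one that misses the open unit box after flowing for some time (`exists_close_missesBox`): rows of
  the lattice are approximated by rational multiples of the rows of a unimodular integer matrix, and then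
  the diagonal lattice so obtained is sheared by fractions with mixed radix expansions (`diagonal_avoid`). By
  compactness the flow time is bounded (`exists_uniform_missesBox`), so, as `c < 1` leaves room for small
  perturbations, a ball of size comparable to the cube consists of violating points
  (`exists_ball_avoiding`). Dropping one child of the subdivision outweighs, for small `γ`, the bounded
  growth of `a ^ γ`.
* If `a` is large (`splits_of_ge`), the cube is subdivided at a ratio polynomial in `a`. The proportion of
  children with distortion more than `u` is then `O(1 / u)` (`tail_bound`): every such child is explained by
  a lattice vector, the vectors are counted through a basis of polynomial size (`card_lattice_le`), and the
  children belonging to one vector lie near an affine subspace (`card_children_le`). Hence the average of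
  the square root of the distortion is bounded, and the factor `a ^ γ` of the parent pays both for the
  distortions of the children and for the gain of dimension.
-/

open scoped BigOperators ENNReal

/-- The set of `c`-Dirichlet improvable real `m × n` matrices, viewed as elements of
`Fin m → Fin n → ℝ ≅ ℝ^{mn}` with the supremum-norm metric. -/
def DIone (m n : ℕ) (c : ℝ) : Set (Fin m → Fin n → ℝ) :=
  {Y | ∃ N₀ : ℝ, 0 < N₀ ∧ ∀ N : ℝ, N₀ ≤ N →
    ∃ (p : Fin m → ℤ) (q : Fin n → ℤ),
      ‖(fun a : Fin m => (∑ b : Fin n, Y a b * (q b : ℝ)) - (p a : ℝ))‖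
          < c * N ^ (-(n : ℝ) / (m : ℝ)) ∧
      0 < ‖(fun b : Fin n => (q b : ℝ))‖ ∧ ‖(fun b : Fin n => (q b : ℝ))‖ < N}

/-! ### Minkowski's theorem for boxes -/

open MeasureTheory in
/-- Minkowski's theorem for a box: a unimodular lattice has a nonzero point in any open box, centred
at the origin, whose half-sides have product exceeding one. -/
theorem minkowski_box {ι : Type*} [Fintype ι] [DecidableEq ι] (G : Matrix ι ι ℝ)
    (hG : |G.det| = 1) (c : ι → ℝ) (hc : ∀ i, 0 < c i) (hprod : 1 < ∏ i, c i) :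
    ∃ z : ι → ℤ, z ≠ 0 ∧ ∀ i, |(G.mulVec fun j => (z j : ℝ)) i| < c i := by
  classical
  set f : (ι → ℝ) →ₗ[ℝ] (ι → ℝ) := Matrix.toLin' G with hf
  have hdet : LinearMap.det f = G.det := LinearMap.det_toLin' G
  have hdet0 : LinearMap.det f ≠ 0 := by
    rw [hdet]; intro h; rw [h] at hG; simp at hG
  set box : Set (ι → ℝ) := Set.univ.pi fun i => Set.Ioo (-c i) (c i) with hbox
  set b := Pi.basisFun ℝ ι with hb
  have hvol : volume (f ⁻¹' box) = ENNReal.ofReal (∏ i, (2 * c i)) := by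
    rw [Measure.addHaar_preimage_linearMap volume hdet0, hdet, abs_inv, hG, hbox,
      Real.volume_pi_Ioo]
    rw [ENNReal.ofReal_prod_of_nonneg (fun i _ => by have := hc i; positivity)]
    simp only [inv_one, ENNReal.ofReal_one, one_mul]
    exact Finset.prod_congr rfl fun i _ => by ring_nf
  have hF : volume (ZSpan.fundamentalDomain b) = 1 := by
    rw [ZSpan.volume_fundamentalDomain]
    have : Matrix.of (b : ι → ι → ℝ) = 1 := by
      ext i j
      simp [hb, Matrix.one_apply, Pi.single_apply, eq_comm]
    rw [this]; simp
  have hcount : Countable (Submodule.span ℤ (Set.range b)).toAddSubgroup :=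
    inferInstanceAs (Countable (Submodule.span ℤ (Set.range b)))
  obtain ⟨x, hx0, hx⟩ := exists_ne_zero_mem_lattice_of_measure_mul_two_pow_lt_measure
    (μ := volume) (s := f ⁻¹' box) (ZSpan.isAddFundamentalDomain' b volume)
    (by
      intro x hx
      simp only [Set.mem_preimage, hbox, Set.mem_pi, Set.mem_univ, true_imp_iff, Set.mem_Ioo,
        map_neg, Pi.neg_apply] at hx ⊢
      intro i
      have := hx i
      constructor <;> linarith [this.1, this.2])
    (by
      apply Convex.linear_preimage
      exact convex_pi fun i _ => convex_Ioo _ _)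
    (by
      rw [hF, hvol, Finset.prod_mul_distrib, Finset.prod_const, Module.finrank_fintype_fun_eq_card,
        one_mul, Finset.card_univ, ENNReal.ofReal_mul (by positivity)]
      rw [ENNReal.ofReal_pow (by norm_num)]
      have h2 : ENNReal.ofReal 2 = 2 := by simp
      rw [h2]
      have h1 : (1 : ℝ≥0∞) < ENNReal.ofReal (∏ i, c i) := by
        rw [← ENNReal.ofReal_one]
        exact (ENNReal.ofReal_lt_ofReal_iff (by linarith)).2 hprod
      calc (2 : ℝ≥0∞) ^ Fintype.card ι = 2 ^ Fintype.card ι * 1 := by rw [mul_one]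
        _ < _ := (ENNReal.mul_lt_mul_iff_right (by simp) (by finiteness)).2 h1)
  have hmem : (x : ι → ℝ) ∈ Submodule.span ℤ (Set.range b) := x.2
  rw [Module.Basis.mem_span_iff_repr_mem] at hmem
  choose z hz using hmem
  have hzx : (fun j => (z j : ℝ)) = (x : ι → ℝ) := by
    funext j
    have := hz j
    simpa [hb] using this
  refine ⟨z, ?_, ?_⟩
  · rintro rfl
    apply hx0
    ext j
    have := congrFun hzx j
    simpa using this.symm
  · intro i
    rw [hzx]
    have := hx
    simp only [Set.mem_preimage, hbox, Set.mem_pi, Set.mem_univ, true_imp_iff, Set.mem_Ioo, hf,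
      Matrix.toLin'_apply] at this
    rw [abs_lt]
    exact this i

/-! ### Reduced bases of unimodular lattices -/

/-- The vectors of length at most `2 * (2 * d / δ) ^ (d - 1)` of a unimodular lattice without nonzero
vectors shorter than `δ` span the space. -/
theorem exists_short_independent {ι : Type*} [Fintype ι] [DecidableEq ι] [Nonempty ι]
    (G : Matrix ι ι ℝ) (hG : |G.det| = 1) (δ : ℝ) (hδ : 0 < δ) (hδ1 : δ ≤ 1)
    (hsh : ∀ z : ι → ℤ, z ≠ 0 → ∃ i, δ ≤ |(G.mulVec fun j => (z j : ℝ)) i|) :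
    ∃ M : Matrix ι ι ℤ, M.det ≠ 0 ∧ ∀ i j, |(G * M.map (fun x : ℤ => (x : ℝ))) i j| ≤
      2 * (2 * Fintype.card ι / δ) ^ (Fintype.card ι - 1) := by
  classical
  set d := Fintype.card ι with hd
  have hd1 : (1 : ℝ) ≤ d := by exact_mod_cast Fintype.card_pos
  set η : ℝ := δ / (2 * d) with hη
  have hη0 : 0 < η := by positivity
  have hη1 : η ≤ 1 := by rw [hη, div_le_one (by positivity)]; linarith
  set ρ : ℝ := 2 * (2 * d / δ) ^ (d - 1) with hρ
  have hρη : ρ = 2 * (η⁻¹) ^ (d - 1) := by rw [hρ, hη, inv_div]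
  have hρ1 : 1 ≤ ρ := by
    rw [hρη]
    have : (1 : ℝ) ≤ η⁻¹ ^ (d - 1) := one_le_pow₀ ((one_le_inv₀ hη0).2 hη1)
    linarith
  set s : Set (ι → ℝ) := {x | ∃ z : ι → ℤ, x = G.mulVec (fun j => (z j : ℝ)) ∧ ∀ i, |x i| ≤ ρ} with hs
  have hspan : Submodule.span ℝ s = ⊤ := by
    by_contra hne
    obtain ⟨f, hf0, hf⟩ := Submodule.exists_le_ker_of_lt_top _ (lt_top_iff_ne_top.2 hne)
    set a : ι → ℝ := fun i => f (Pi.single i 1) with ha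
    have hfa : ∀ x, f x = ∑ i, x i * a i := by
      intro x
      conv_lhs => rw [pi_eq_sum_univ' x]
      simp [ha, map_sum]
    obtain ⟨i0, hi0⟩ := Finite.exists_max (fun i => |a i|)
    have ha0 : 0 < |a i0| := by
      rw [abs_pos]
      intro h0
      apply hf0
      refine LinearMap.ext fun x => ?_
      have : ∀ i, a i = 0 := fun i => by
        have := hi0 i
        rw [h0, abs_zero] at this
        exact abs_eq_zero.1 (le_antisymm this (abs_nonneg _))
      simp [hfa, this]
    obtain ⟨z, hz0, hz⟩ := minkowski_box G hG (fun i => if i = i0 then ρ else η)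
      (fun i => by split_ifs <;> linarith)
      (by
        rw [← Finset.mul_prod_erase _ _ (Finset.mem_univ i0)]
        rw [Finset.prod_congr rfl (g := fun _ => η)
          (fun i hi => by rw [if_neg (Finset.ne_of_mem_erase hi)])]
        rw [if_pos rfl, Finset.prod_const, Finset.card_erase_of_mem (Finset.mem_univ _),
          Finset.card_univ, ← hd, hρη, mul_assoc, ← mul_pow, inv_mul_cancel₀ hη0.ne', one_pow]
        norm_num)
    set x := G.mulVec (fun j => (z j : ℝ)) with hx
    have hxs : x ∈ s := ⟨z, rfl, fun i => by
      have := hz i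
      split_ifs at this <;> linarith⟩
    have hfx : f x = 0 := hf (Submodule.subset_span hxs)
    rw [hfa, ← Finset.add_sum_erase _ _ (Finset.mem_univ i0)] at hfx
    have h1 : |x i0 * a i0| ≤ d * (η * |a i0|) := by
      have : x i0 * a i0 = -∑ i ∈ Finset.univ.erase i0, x i * a i := by linarith
      rw [this, abs_neg]
      calc |∑ i ∈ Finset.univ.erase i0, x i * a i| ≤ ∑ i ∈ Finset.univ.erase i0, |x i * a i| :=
            Finset.abs_sum_le_sum_abs _ _
        _ ≤ ∑ i ∈ Finset.univ.erase i0, η * |a i0| := by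
            apply Finset.sum_le_sum
            intro i hi
            rw [abs_mul]
            have := hz i
            rw [if_neg (Finset.ne_of_mem_erase hi)] at this
            exact mul_le_mul this.le (hi0 i) (abs_nonneg _) hη0.le
        _ ≤ ∑ i : ι, η * |a i0| := Finset.sum_le_sum_of_subset_of_nonneg (Finset.erase_subset _ _)
            (fun _ _ _ => by positivity)
        _ = d * (η * |a i0|) := by simp [hd]
    have h2 : |x i0| ≤ δ / 2 := by
      rw [abs_mul] at h1
      have h3 : d * (η * |a i0|) = (δ / 2) * |a i0| := by rw [hη]; field_simp
      rw [h3] at h1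
      exact le_of_mul_le_mul_right h1 ha0
    obtain ⟨i, hi⟩ := hsh z hz0
    by_cases hii : i = i0
    · subst hii; linarith
    · have h4 := hz i
      rw [if_neg hii] at h4
      have : η ≤ δ / 2 := by
        rw [hη]; exact div_le_div_of_nonneg_left hδ.le (by norm_num) (by linarith)
      linarith
  obtain ⟨b, hbs, hbspan, hbli⟩ := exists_linearIndependent ℝ s
  have hB := Module.Basis.mk hbli (by rw [Subtype.range_coe, hbspan, hspan])
  have hfin : Finite b := Module.Finite.finite_basis hB
  have := Fintype.ofFinite b
  have hcard : Fintype.card ι = Fintype.card b := by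
    rw [← Module.finrank_eq_card_basis hB, Module.finrank_fintype_fun_eq_card]
  let e : ι ≃ b := Fintype.equivOfCardEq hcard
  have hmem : ∀ j, ∃ z : ι → ℤ, (e j : ι → ℝ) = G.mulVec (fun j => (z j : ℝ)) ∧
      ∀ i, |(e j : ι → ℝ) i| ≤ ρ := fun j => hbs (e j).2
  choose z hz hzρ using hmem
  have key : ∀ i j, (G * (Matrix.of fun i j => z j i).map (fun x : ℤ => (x : ℝ))) i j =
      (e j : ι → ℝ) i := by
    intro i j
    rw [hz j]
    simp [Matrix.mul_apply, Matrix.mulVec, dotProduct]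
  refine ⟨Matrix.of fun i j => z j i, ?_, ?_⟩
  · intro h0
    have hli : LinearIndependent ℝ (fun j => (e j : ι → ℝ)) := hbli.comp e e.injective
    have hunit : IsUnit (G * (Matrix.of fun i j => z j i).map (fun x : ℤ => (x : ℝ))) := by
      have hcol : (fun j => (e j : ι → ℝ)) =
          (G * (Matrix.of fun i j => z j i).map (fun x : ℤ => (x : ℝ))).col := by
        funext j i
        exact (key i j).symm
      rw [hcol] at hli
      exact Matrix.linearIndependent_cols_iff_isUnit.1 hli
    rw [Matrix.isUnit_iff_isUnit_det, Matrix.det_mul] at hunit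
    have : ((Matrix.of fun i j => z j i).map (fun x : ℤ => (x : ℝ))).det = 0 := by
      have := (Int.cast_det (R := ℝ) (Matrix.of fun i j => z j i)).symm
      rw [h0] at this
      simpa using this
    rw [this] at hunit
    simp at hunit
  · intro i j
    rw [key]; exact hzρ j i

/-- Lattice reduction: from independent lattice vectors of length at most `ρ` and index `D` one gets
a basis of vectors of length at most `D ^ d * ρ`. Replacing a column by a half-integral
combination of the columns at least halves the index. -/
theorem exists_basis_of_independent {ι : Type*} [Fintype ι] [DecidableEq ι] [Nonempty ι]
    (G : Matrix ι ι ℝ) : ∀ (D : ℕ) (M : Matrix ι ι ℤ) (ρ : ℝ), M.det.natAbs = D → M.det ≠ 0 →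
      0 ≤ ρ → (∀ i j, |(G * M.map (fun x : ℤ => (x : ℝ))) i j| ≤ ρ) →
      ∃ γ : Matrix ι ι ℤ, |γ.det| = 1 ∧
        ∀ i j, |(G * γ.map (fun x : ℤ => (x : ℝ))) i j| ≤ (D : ℝ) ^ (Fintype.card ι) * ρ := by
  classical
  intro D
  induction D using Nat.strong_induction_on with
  | _ D ih =>
    intro M ρ hD hM0 hρ hM
    have hD0 : 1 ≤ D := by
      rw [← hD]; exact Int.natAbs_pos.2 hM0
    have hd1 : 1 ≤ Fintype.card ι := Fintype.card_pos
    by_cases h1 : D = 1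
    · refine ⟨M, ?_, ?_⟩
      · rw [Int.abs_eq_natAbs, hD, h1]; rfl
      · intro i j; rw [h1]; simpa using hM i j
    set MR : Matrix ι ι ℝ := M.map (fun x : ℤ => (x : ℝ)) with hMR
    have hdetMR : MR.det = (M.det : ℝ) := (Int.cast_det (R := ℝ) M).symm
    have hMR0 : MR.det ≠ 0 := by rw [hdetMR]; exact_mod_cast hM0
    have hMRu : IsUnit MR.det := isUnit_iff_ne_zero.2 hMR0
    have hex : ∃ i j, ∀ k : ℤ, MR⁻¹ i j ≠ k := by
      by_contra hcon
      push Not at hcon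
      choose N hN using hcon
      have h2 : M * Matrix.of N = 1 := by
        have h3 : MR * (Matrix.of N).map (fun x : ℤ => (x : ℝ)) = 1 := by
          have : (Matrix.of N).map (fun x : ℤ => (x : ℝ)) = MR⁻¹ := by
            ext i j; simp [hN]
          rw [this]; exact Matrix.mul_nonsing_inv _ hMRu
        ext i j
        have h4 := congrFun (congrFun h3 i) j
        simp only [Matrix.mul_apply, hMR, Matrix.map_apply, Matrix.of_apply, Matrix.one_apply] at h4 ⊢
        have : ((∑ k, M i k * N k j : ℤ) : ℝ) = ((if i = j then 1 else 0 : ℤ) : ℝ) := by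
          push_cast; rw [h4]
        exact_mod_cast this
      have h5 : M.det * (Matrix.of N).det = 1 := by rw [← Matrix.det_mul, h2, Matrix.det_one]
      have h6 := Int.isUnit_iff_natAbs_eq.1 (IsUnit.of_mul_eq_one _ h5)
      omega
    obtain ⟨i, j, hij⟩ := hex
    set t : ι → ℝ := fun k => MR⁻¹ k j with ht
    set r : ι → ℤ := fun k => round (t k) with hr
    set t' : ι → ℝ := fun k => t k - r k with ht'
    have ht'b : ∀ k, |t' k| ≤ 1 / 2 := fun k => abs_sub_round (t k)
    have ht'i : t' i ≠ 0 := by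
      intro h0
      exact hij (r i) (by simp only [ht', ht] at h0; linarith)
    set w : ι → ℤ := fun k => (Pi.single j 1 : ι → ℤ) k - M.mulVec r k with hw
    have hwt : (fun k => (w k : ℝ)) = MR.mulVec t' := by
      have h1 : MR.mulVec t = Pi.single j 1 := by
        have := Matrix.mul_nonsing_inv _ hMRu
        ext k
        have h2 := congrFun (congrFun this k) j
        simp only [Matrix.mul_apply, Matrix.one_apply] at h2
        simp only [Matrix.mulVec, dotProduct, ht, h2, Pi.single_apply]
      have h2 : MR.mulVec t' = MR.mulVec t - MR.mulVec (fun k => (r k : ℝ)) := by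
        rw [← Matrix.mulVec_sub]; rfl
      rw [h2, h1]
      ext k
      simp [hw, Matrix.mulVec, dotProduct, hMR, Pi.single_apply]
    set M' := M.updateCol i w with hM'
    have hM'R : M'.map (fun x : ℤ => (x : ℝ)) = MR.updateCol i (MR.mulVec t') := by
      rw [← hwt]
      ext a b
      simp only [hM', Matrix.map_apply, Matrix.updateCol_apply, hMR]
      split_ifs <;> rfl
    have hdet' : (M'.det : ℝ) = MR.det * t' i := by
      rw [show (M'.det : ℝ) = (M'.map (fun x : ℤ => (x : ℝ))).det from Int.cast_det (R := ℝ) M', hM'R]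
      rw [← Matrix.cramer_apply, Matrix.cramer_eq_adjugate_mulVec, Matrix.mulVec_mulVec,
        Matrix.adjugate_mul, Matrix.smul_mulVec, Matrix.one_mulVec]
      rfl
    have hdet'0 : M'.det ≠ 0 := by
      intro h0
      rw [h0] at hdet'
      exact mul_ne_zero hMR0 ht'i (by simpa using hdet'.symm)
    have hDr : |(M.det : ℝ)| = D := by rw [← hD, Nat.cast_natAbs, Int.cast_abs]
    have hhalf : (M'.det.natAbs : ℝ) ≤ D / 2 := by
      rw [Nat.cast_natAbs, Int.cast_abs, hdet', abs_mul, hdetMR, hDr]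
      have := ht'b i
      have hD' : (0 : ℝ) ≤ D := by positivity
      nlinarith
    have hlt : M'.det.natAbs < D := by
      have : (1 : ℝ) ≤ D := by exact_mod_cast hD0
      have h3 : (M'.det.natAbs : ℝ) < D := by linarith
      exact_mod_cast h3
    have hd1' : (1 : ℝ) ≤ Fintype.card ι := by exact_mod_cast hd1
    obtain ⟨γ, hγ, hγb⟩ := ih _ hlt M' (Fintype.card ι * ρ) rfl hdet'0 (by positivity) (by
      intro a b
      rw [hM'R]
      by_cases hb : b = i
      · have : (G * MR.updateCol i (MR.mulVec t')) a b = (G * MR).mulVec t' a := by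
          rw [← Matrix.mulVec_mulVec]
          simp only [Matrix.mul_apply, Matrix.updateCol_apply, hb, if_true]
          rfl
        rw [this]
        calc |(G * MR).mulVec t' a| ≤ ∑ k, |(G * MR) a k * t' k| := Finset.abs_sum_le_sum_abs _ _
          _ ≤ ∑ k : ι, ρ := by
            apply Finset.sum_le_sum
            intro k _
            rw [abs_mul]
            have := hM a k
            have := ht'b k
            calc _ ≤ ρ * (1/2) := mul_le_mul (hM a k) (ht'b k) (abs_nonneg _) hρ
              _ ≤ ρ := by linarith
          _ = _ := by simp
      · have : (G * MR.updateCol i (MR.mulVec t')) a b = (G * MR) a b := by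
          simp only [Matrix.mul_apply, Matrix.updateCol_apply, hb, if_false]
        rw [this]
        have := hM a b
        nlinarith)
    refine ⟨γ, hγ, fun a b => (hγb a b).trans ?_⟩
    have h2d : (Fintype.card ι : ℝ) ≤ 2 ^ (Fintype.card ι) := by
      exact_mod_cast (Nat.lt_two_pow_self).le
    calc (M'.det.natAbs : ℝ) ^ Fintype.card ι * (Fintype.card ι * ρ)
        ≤ (D / 2) ^ Fintype.card ι * (2 ^ Fintype.card ι * ρ) := by gcongr
      _ = (D : ℝ) ^ Fintype.card ι * ρ := by rw [div_pow]; field_simp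

/-- A unimodular lattice without nonzero vectors shorter than `a⁻¹` has a basis of vectors whose
length is polynomial in `a`. -/
theorem reduced_basis (ι : Type*) [Fintype ι] [DecidableEq ι] [Nonempty ι] :
    ∃ C : ℝ, 1 ≤ C ∧ ∃ e : ℕ, ∀ (G : Matrix ι ι ℝ) (a : ℝ), |G.det| = 1 → 1 ≤ a →
      (∀ z : ι → ℤ, z ≠ 0 → ∃ i, a⁻¹ ≤ |(G.mulVec fun j => (z j : ℝ)) i|) →
      ∃ γ : Matrix ι ι ℤ, |γ.det| = 1 ∧
        ∀ i j, |(G * γ.map (fun x : ℤ => (x : ℝ))) i j| ≤ C * a ^ e := by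
  classical
  set d := Fintype.card ι with hd
  have hd1 : 1 ≤ d := Fintype.card_pos
  have hd1' : (1 : ℝ) ≤ d := by exact_mod_cast hd1
  have hb : (1 : ℝ) ≤ 2 * (2 * d) ^ (d - 1) := by
    have : (1 : ℝ) ≤ (2 * d) ^ (d - 1) := one_le_pow₀ (by linarith)
    linarith
  have hf : (1 : ℝ) ≤ d.factorial := by exact_mod_cast Nat.succ_le_of_lt (Nat.factorial_pos d)
  refine ⟨(d.factorial * (2 * (2 * d) ^ (d - 1)) ^ d) ^ d * (2 * (2 * d) ^ (d - 1)),
    ?_, ((d - 1) * d) * d + (d - 1), ?_⟩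
  · have h1 : (1 : ℝ) ≤ (2 * (2 * d) ^ (d - 1)) ^ d := one_le_pow₀ hb
    have h2 : (1 : ℝ) ≤ (d.factorial * (2 * (2 * d) ^ (d - 1)) ^ d) ^ d :=
      one_le_pow₀ (one_le_mul_of_one_le_of_one_le hf h1)
    exact one_le_mul_of_one_le_of_one_le h2 hb
  intro G a hG ha hsh
  have ha0 : 0 < a := by linarith
  obtain ⟨M, hM0, hM⟩ := exists_short_independent G hG a⁻¹ (by positivity) (inv_le_one_of_one_le₀ ha) hsh
  set ρ : ℝ := 2 * (2 * d / a⁻¹) ^ (d - 1) with hρ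
  have hρ0 : 0 ≤ ρ := by positivity
  obtain ⟨γ, hγ, hγb⟩ := exists_basis_of_independent G _ M ρ rfl hM0 hρ0 hM
  refine ⟨γ, hγ, fun i j => (hγb i j).trans ?_⟩
  have hD : (M.det.natAbs : ℝ) ≤ d.factorial * ρ ^ d := by
    have h1 : |(G * M.map (fun x : ℤ => (x : ℝ))).det| ≤ (d.factorial : ℕ) • ρ ^ d := by
      have := Matrix.det_le (A := G * M.map (fun x : ℤ => (x : ℝ))) (abv := AbsoluteValue.abs)
        (x := ρ) (fun i j => hM i j)
      simpa using this
    rw [Matrix.det_mul, abs_mul, hG, one_mul, ← (show (M.det : ℝ) = _ from Int.cast_det (R := ℝ) M),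
      ← Int.cast_abs, ← Nat.cast_natAbs, nsmul_eq_mul] at h1
    exact h1
  have hρe : ρ = (2 * (2 * d) ^ (d - 1)) * a ^ (d - 1) := by
    rw [hρ, div_inv_eq_mul, mul_pow, mul_assoc]
  calc (M.det.natAbs : ℝ) ^ d * ρ ≤ (d.factorial * ρ ^ d) ^ d * ρ := by gcongr
    _ = _ := by rw [hρe]; ring

/-! ### Counting lattice points -/

open MeasureTheory in
/-- Volume count: unit cubes at the points counted are disjoint and lie in a dilated box. -/
theorem card_le_of_basis {ι : Type*} [Fintype ι] [DecidableEq ι] [Nonempty ι]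
    (H : Matrix ι ι ℝ) (hH : |H.det| = 1) (ρ₁ ρ : ℝ) (hρ : 0 ≤ ρ)
    (hb : ∀ i j, |H i j| ≤ ρ₁) (F : Finset (ι → ℤ))
    (hF : ∀ z ∈ F, ∀ i, |(H.mulVec fun j => (z j : ℝ)) i| ≤ ρ) :
    (F.card : ℝ) ≤ (2 * (ρ + Fintype.card ι * ρ₁)) ^ Fintype.card ι := by
  classical
  set d := Fintype.card ι with hd
  have hρ₁ : 0 ≤ ρ₁ := by
    obtain ⟨i⟩ := ‹Nonempty ι›
    exact (abs_nonneg _).trans (hb i i)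
  set R := ρ + d * ρ₁ with hR
  have hR0 : 0 ≤ R := by positivity
  set f : (ι → ℝ) →ₗ[ℝ] (ι → ℝ) := Matrix.toLin' H with hf
  have hdet : LinearMap.det f = H.det := LinearMap.det_toLin' H
  have hdet0 : LinearMap.det f ≠ 0 := by
    rw [hdet]; intro h; rw [h] at hH; simp at hH
  set box : Set (ι → ℝ) := Set.univ.pi fun _ => Set.Icc (-R) R with hbox
  have hvol : volume (f ⁻¹' box) = ENNReal.ofReal ((2 * R) ^ d) := by
    rw [Measure.addHaar_preimage_linearMap volume hdet0, hdet, abs_inv, hH, hbox, volume_pi,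
      Measure.pi_pi]
    simp only [Real.volume_Icc, Finset.prod_const, Finset.card_univ, inv_one, ENNReal.ofReal_one,
      one_mul]
    rw [ENNReal.ofReal_pow (by positivity), hd]
    ring_nf
  set cube : (ι → ℤ) → Set (ι → ℝ) := fun w => Set.univ.pi fun i => Set.Ico (w i : ℝ) (w i + 1)
    with hcube
  have hcvol : ∀ w, volume (cube w) = 1 := by
    intro w
    simp [hcube, volume_pi, Measure.pi_pi]
  have hsub : (⋃ w ∈ F, cube w) ⊆ f ⁻¹' box := by
    intro x hx
    simp only [Set.mem_iUnion] at hx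
    obtain ⟨w, hw, hx⟩ := hx
    have hxi : ∀ i, |x i - w i| ≤ 1 := by
      intro i
      have := hx i (Set.mem_univ _)
      rw [Set.mem_Ico] at this
      rw [abs_le]; constructor <;> linarith [this.1, this.2]
    simp only [Set.mem_preimage, hbox, Set.mem_pi, Set.mem_univ, true_imp_iff, Set.mem_Icc, hf,
      Matrix.toLin'_apply]
    intro i
    rw [← abs_le]
    have h1 : H.mulVec x = H.mulVec (fun j => (w j : ℝ)) + H.mulVec (x - fun j => (w j : ℝ)) := by
      rw [← Matrix.mulVec_add]; congr 1; ext; simp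
    rw [h1, Pi.add_apply]
    refine (abs_add_le _ _).trans (add_le_add (hF w hw i) ?_)
    calc |H.mulVec (x - fun j => (w j : ℝ)) i| ≤ ∑ j, |H i j * (x j - w j)| :=
          Finset.abs_sum_le_sum_abs _ _
      _ ≤ ∑ j : ι, ρ₁ := by
          apply Finset.sum_le_sum
          intro j _
          rw [abs_mul]
          calc _ ≤ ρ₁ * 1 := mul_le_mul (hb i j) (hxi j) (abs_nonneg _) hρ₁
            _ = ρ₁ := mul_one _
      _ = d * ρ₁ := by simp [hd]
  have hdisj : (F : Set (ι → ℤ)).PairwiseDisjoint cube := by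
    intro w _ w' _ hne
    rw [Function.onFun, Set.disjoint_left]
    intro x hx hx'
    apply hne
    ext i
    have h1 := hx i (Set.mem_univ _)
    have h2 := hx' i (Set.mem_univ _)
    rw [← Int.floor_eq_iff.2 (Set.mem_Ico.1 h1), ← Int.floor_eq_iff.2 (Set.mem_Ico.1 h2)]
  have hle := measure_mono (μ := volume) hsub
  rw [measure_biUnion_finset hdisj
    (fun w _ => MeasurableSet.univ_pi fun i => measurableSet_Ico), hvol] at hle
  simp only [hcvol, Finset.sum_const, nsmul_eq_mul, mul_one] at hle
  have := ENNReal.toReal_mono ENNReal.ofReal_ne_top hle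
  rwa [ENNReal.toReal_ofReal (by positivity), ENNReal.toReal_natCast] at this

/-- The number of lattice points in a box of half-side `ρ`, for a unimodular lattice without nonzero
vectors shorter than `a⁻¹`: the expected `ρ ^ d` as soon as `ρ` exceeds a power of `a`. -/
theorem card_lattice_le (ι : Type*) [Fintype ι] [DecidableEq ι] [Nonempty ι] :
    ∃ C : ℝ, 1 ≤ C ∧ ∃ e : ℕ, ∀ (G : Matrix ι ι ℝ) (a : ℝ), |G.det| = 1 → 1 ≤ a →
      (∀ z : ι → ℤ, z ≠ 0 → ∃ i, a⁻¹ ≤ |(G.mulVec fun j => (z j : ℝ)) i|) →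
      ∀ (ρ : ℝ) (F : Finset (ι → ℤ)), 0 ≤ ρ →
        (∀ z ∈ F, ∀ i, |(G.mulVec fun j => (z j : ℝ)) i| ≤ ρ) →
        (F.card : ℝ) ≤ C * (ρ + a ^ e) ^ Fintype.card ι := by
  classical
  obtain ⟨C, hC, e, h⟩ := reduced_basis ι
  set d := Fintype.card ι with hd
  have hd1 : (1 : ℝ) ≤ d := by exact_mod_cast Fintype.card_pos
  have hdC : 1 ≤ d * C := one_le_mul_of_one_le_of_one_le hd1 hC
  refine ⟨(2 * (d * C)) ^ d, one_le_pow₀ (by linarith), e, ?_⟩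
  intro G a hG ha hsh ρ F hρ hF
  obtain ⟨γ, hγ, hγb⟩ := h G a hG ha hsh
  have hu : IsUnit γ.det := Int.isUnit_iff_abs_eq.2 hγ
  have hae : 0 ≤ a ^ e := by positivity
  set F' := F.image (fun z => γ⁻¹.mulVec z) with hF'
  have hinj : Function.Injective (fun z : ι → ℤ => γ⁻¹.mulVec z) := by
    intro z z' hzz
    have := congrArg γ.mulVec hzz
    simpa [Matrix.mulVec_mulVec, Matrix.mul_nonsing_inv _ hu] using this
  have hcard : F'.card = F.card := Finset.card_image_of_injective _ hinj
  have hdet : |(G * γ.map (fun x : ℤ => (x : ℝ))).det| = 1 := by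
    rw [Matrix.det_mul, abs_mul, hG, ← (show (γ.det : ℝ) = _ from Int.cast_det (R := ℝ) γ),
      ← Int.cast_abs, hγ]
    simp
  have key := card_le_of_basis _ hdet (C * a ^ e) ρ hρ hγb F' (by
    intro w hw i
    rw [hF', Finset.mem_image] at hw
    obtain ⟨z, hz, rfl⟩ := hw
    have h1 : (γ.map (fun x : ℤ => (x : ℝ))).mulVec (fun j => ((γ⁻¹.mulVec z j : ℤ) : ℝ)) =
        fun j => (z j : ℝ) := by
      ext j
      have h2 : γ.mulVec (γ⁻¹.mulVec z) = z := by
        rw [Matrix.mulVec_mulVec, Matrix.mul_nonsing_inv _ hu, Matrix.one_mulVec]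
      have h3 := congrFun h2 j
      rw [← h3]
      simp [Matrix.mulVec, dotProduct]
    rw [← Matrix.mulVec_mulVec, h1]
    exact hF z hz i)
  rw [hcard] at key
  refine key.trans ?_
  rw [← mul_pow, ← hd]
  have hle : 2 * (ρ + d * (C * a ^ e)) ≤ 2 * (d * C) * (ρ + a ^ e) := by nlinarith
  exact pow_le_pow_left₀ (by positivity) hle d

/-! ### Sheared diagonal lattices that miss a box -/

/-- If `w i + J / (k 0 ⋯ k i)` is an integer translate smaller than `1 / k i` for every `i < m`, then
`k 0 ⋯ k (m - 1)` divides `J` and all these numbers vanish. -/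
theorem dvd_chain (m : ℕ) (k : ℕ → ℕ) (hk : ∀ i, 0 < k i) (J : ℤ) (w : ℕ → ℤ)
    (h : ∀ i < m, |(w i : ℝ) + J / (∏ j ∈ Finset.range (i + 1), (k j : ℝ))| * k i < 1) :
    ((∏ j ∈ Finset.range m, k j : ℕ) : ℤ) ∣ J ∧
      ∀ i < m, (w i : ℝ) + J / (∏ j ∈ Finset.range (i + 1), (k j : ℝ)) = 0 := by
  have main : ∀ i ≤ m, ((∏ j ∈ Finset.range i, k j : ℕ) : ℤ) ∣ J ∧
      ∀ i' < i, (w i' : ℝ) + J / (∏ j ∈ Finset.range (i' + 1), (k j : ℝ)) = 0 := by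
    intro i
    induction i with
    | zero => intro _; simp
    | succ i ih =>
      intro him
      obtain ⟨⟨q, hq⟩, hz⟩ := ih (by omega)
      have hP : (∏ j ∈ Finset.range i, (k j : ℝ)) ≠ 0 :=
        Finset.prod_ne_zero_iff.2 fun j _ => by exact_mod_cast (hk j).ne'
      have hki : (k i : ℝ) ≠ 0 := by exact_mod_cast (hk i).ne'
      have hki0 : (0 : ℝ) < k i := by exact_mod_cast hk i
      have hval : (w i : ℝ) + J / (∏ j ∈ Finset.range (i + 1), (k j : ℝ)) = (w i * k i + q) / k i := by
        rw [hq, Finset.prod_range_succ]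
        push_cast
        field_simp
      have h1 := h i (by omega)
      rw [hval, abs_div, abs_of_pos hki0, div_mul_cancel₀ _ hki] at h1
      have h2 : w i * k i + q = 0 := by
        have : |w i * k i + q| < 1 := by exact_mod_cast h1
        exact Int.abs_lt_one_iff.1 this
      have hzi : (w i : ℝ) + J / (∏ j ∈ Finset.range (i + 1), (k j : ℝ)) = 0 := by
        rw [hval]
        have : (w i : ℝ) * k i + q = 0 := by exact_mod_cast h2
        rw [this, zero_div]
      refine ⟨⟨-w i, ?_⟩, ?_⟩
      · rw [hq, Finset.prod_range_succ]
        push_cast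
        have : q = - (w i * k i) := by linarith
        rw [this]; ring
      · intro i' hi'
        rcases Nat.lt_succ_iff_lt_or_eq.1 hi' with h3 | h3
        · exact hz i' h3
        · rw [h3]; exact hzi
  exact main m le_rfl

/-- Mixed radix expansions: if `l 0 ⋯ l (n - 1)` divides `∑ b, l 0 ⋯ l (b - 1) * y b` and the digits
satisfy `|y b| < l b`, then all digits vanish. -/
theorem digits_eq_zero (n : ℕ) (l : ℕ → ℕ) (hl : ∀ i, 0 < l i) (y : ℕ → ℤ)
    (hdvd : ((∏ j ∈ Finset.range n, l j : ℕ) : ℤ) ∣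
      ∑ b ∈ Finset.range n, ((∏ j ∈ Finset.range b, l j : ℕ) : ℤ) * y b)
    (h : ∀ b < n, (∀ b' < b, y b' = 0) → |y b| < l b) : ∀ b < n, y b = 0 := by
  intro b
  induction b using Nat.strong_induction_on with
  | _ b ih =>
    intro hb
    have hprev : ∀ b' < b, y b' = 0 := fun b' hb' => ih b' hb' (hb'.trans hb)
    have hlt := h b hb hprev
    have hdiv : (l b : ℤ) ∣ y b := by
      have hP : ((∏ j ∈ Finset.range b, l j : ℕ) : ℤ) ≠ 0 := by
        exact_mod_cast Finset.prod_ne_zero_iff.2 fun j _ => (hl j).ne'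
      apply Int.dvd_of_mul_dvd_mul_left hP
      have h1 : ((∏ j ∈ Finset.range (b + 1), l j : ℕ) : ℤ) ∣
          ∑ b ∈ Finset.range n, ((∏ j ∈ Finset.range b, l j : ℕ) : ℤ) * y b := by
        refine dvd_trans ?_ hdvd
        exact_mod_cast Finset.prod_dvd_prod_of_subset _ _ _
          (Finset.range_subset_range.2 (by omega))
      rw [← Finset.add_sum_erase _ _ (Finset.mem_range.2 hb)] at h1
      have h2 : ((∏ j ∈ Finset.range (b + 1), l j : ℕ) : ℤ) ∣
          ∑ b ∈ (Finset.range n).erase b, ((∏ j ∈ Finset.range b, l j : ℕ) : ℤ) * y b := by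
        apply Finset.dvd_sum
        intro b' hb'
        rcases lt_or_ge b' b with h3 | h3
        · rw [hprev b' h3]; simp
        · apply Dvd.dvd.mul_right
          have : b + 1 ≤ b' := by
            have := Finset.ne_of_mem_erase hb'
            omega
          exact_mod_cast Finset.prod_dvd_prod_of_subset _ _ _
            (Finset.range_subset_range.2 this)
      have h3 := (dvd_add_left h2).1 h1
      rw [Finset.prod_range_succ] at h3
      exact_mod_cast h3
    exact Int.eq_zero_of_abs_lt_dvd hdiv hlt

/-- Small perturbations of a diagonal rational lattice which miss a box of critical volume. The
entries of the perturbation are the fractional parts of `l 0 ⋯ l (b - 1) / (k 0 ⋯ k i)`, where the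
`k i` and `l b` are the reciprocal sides, respectively sides, of the box. -/
theorem diagonal_avoid (m n : ℕ) (hm : 0 < m) (hn : 0 < n) (κ lam : ℕ → ℕ)
    (hκ : ∀ i, 0 < κ i) (hlam : ∀ i, 0 < lam i) (ε : ℝ) (hε : 0 < ε) :
    ∃ S : ℕ → ℕ → ℝ, (∀ i < m, ∀ b < n, |S i b| < ε) ∧ ∃ B : ℕ, 2 ≤ B ∧
      ∀ x y : ℕ → ℤ,
        (∀ i < m, |(x i : ℝ) + ∑ b ∈ Finset.range n, S i b * y b| * B ^ n < κ i) →
        (∀ j < n - 1, (|y j| : ℝ) < B ^ m * lam j) →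
        ((∀ i < m, (x i : ℝ) + ∑ b ∈ Finset.range n, S i b * y b = 0) → (∀ j < n - 1, y j = 0) →
          (|y (n - 1)| : ℝ) * ((∏ i ∈ Finset.range m, κ i : ℕ) *
            (∏ j ∈ Finset.range (n - 1), lam j : ℕ)) < B ^ m) →
        (∀ i < m, x i = 0) ∧ ∀ b < n, y b = 0 := by
  set Kt : ℕ → ℕ := fun i => ∏ j ∈ Finset.range i, κ j with hKt
  set Kb : ℕ → ℕ := fun b => ∏ j ∈ Finset.range b, lam j with hKb
  have hKt0 : ∀ i, 0 < Kt i := fun i => Finset.prod_pos fun j _ => hκ j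
  have hKb0 : ∀ i, 0 < Kb i := fun i => Finset.prod_pos fun j _ => hlam j
  set Kp : ℕ := Kt m * Kb (n - 1) with hKp
  have hKp0 : 0 < Kp := Nat.mul_pos (hKt0 _) (hKb0 _)
  obtain ⟨t, ht⟩ := exists_nat_gt (Kp / ε)
  set B : ℕ := Kp * (t + 2) with hB
  have hB2 : 2 ≤ B := by rw [hB]; nlinarith
  have hB0 : 0 < B := by omega
  have hκB : ∀ i < m, κ i ∣ B ^ n := fun i hi => by
    refine dvd_pow ?_ hn.ne'
    exact ((Finset.dvd_prod_of_mem κ (Finset.mem_range.2 hi)).mul_right _).mul_right _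
  set k : ℕ → ℕ := fun i => if i < m then B ^ n / κ i else 1 with hk
  have hkκ : ∀ i < m, k i * κ i = B ^ n := fun i hi => by
    simp only [hk, if_pos hi]; exact Nat.div_mul_cancel (hκB i hi)
  have hk0 : ∀ i, 0 < k i := by
    intro i
    by_cases hi : i < m
    · have := hkκ i hi
      exact Nat.pos_of_ne_zero (by rintro h0; rw [h0, zero_mul] at this; exact (pow_pos hB0 n).ne this)
    · simp [hk, hi]
  have hkprod : ∀ i ≤ m, (∏ j ∈ Finset.range i, k j) * Kt i = B ^ (n * i) := by
    intro i hi
    rw [hKt, ← Finset.prod_mul_distrib, Finset.prod_congr rfl (g := fun _ => B ^ n)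
      (fun j hj => hkκ j (by have := Finset.mem_range.1 hj; omega))]
    simp [pow_mul]
  have hKpB : Kp ∣ B ^ m := dvd_pow (Dvd.intro _ rfl) hm.ne'
  set l : ℕ → ℕ := fun b => if b < n - 1 then B ^ m * lam b else B ^ m / Kp with hl
  have hl0 : ∀ b, 0 < l b := by
    intro b
    by_cases hb : b < n - 1
    · simp only [hl, if_pos hb]; exact Nat.mul_pos (pow_pos hB0 _) (hlam b)
    · simp only [hl, if_neg hb]; exact Nat.div_pos (Nat.le_of_dvd (pow_pos hB0 _) hKpB) hKp0
  have hlprod : ∀ b ≤ n - 1, (∏ j ∈ Finset.range b, l j) = B ^ (m * b) * Kb b := by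
    intro b hb
    rw [Finset.prod_congr rfl (g := fun j => B ^ m * lam j) (fun j hj => by
      have := Finset.mem_range.1 hj
      simp only [hl]; rw [if_pos (by omega)]), Finset.prod_mul_distrib]
    simp [hKb, pow_mul]
  have hkl : (∏ j ∈ Finset.range m, k j) = ∏ j ∈ Finset.range n, l j := by
    have h1 := hkprod m le_rfl
    obtain ⟨n', rfl⟩ : ∃ n', n = n' + 1 := ⟨n - 1, by omega⟩
    have h2 := hlprod n' le_rfl
    rw [Finset.prod_range_succ, h2]
    have h3 : l n' * Kp = B ^ m := by
      simp only [hl]; rw [if_neg (by omega)]; exact Nat.div_mul_cancel hKpB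
    apply Nat.eq_of_mul_eq_mul_right (hKt0 m)
    rw [h1]
    have h4 : B ^ (m * n') * Kb n' * l n' * Kt m = B ^ (m * n') * (l n' * Kp) := by
      rw [hKp]; simp only [Nat.add_sub_cancel]; ring
    rw [h4, h3, ← pow_add]; ring_nf
  have hP0 : ∀ i, (0 : ℝ) < ∏ j ∈ Finset.range i, (k j : ℝ) := fun i =>
    Finset.prod_pos fun j _ => by exact_mod_cast hk0 j
  have hPR : ∀ i ≤ m, (∏ j ∈ Finset.range i, (k j : ℝ)) * Kt i = (B : ℝ) ^ (n * i) :=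
    fun i hi => by exact_mod_cast hkprod i hi
  have hLR : ∀ b ≤ n - 1, ((∏ j ∈ Finset.range b, l j : ℕ) : ℝ) = (B : ℝ) ^ (m * b) * Kb b :=
    fun b hb => by exact_mod_cast hlprod b hb
  have hBR : (0 : ℝ) < B := by exact_mod_cast hB0
  have hratio : ∀ i < m, ∀ b < n, ((∏ j ∈ Finset.range b, l j : ℕ) : ℝ) /
      (∏ j ∈ Finset.range (i + 1), (k j : ℝ)) =
      (B : ℝ) ^ (m * b) * Kb b * Kt (i + 1) / (B : ℝ) ^ (n * (i + 1)) := by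
    intro i hi b hb
    have hK : (0 : ℝ) < Kt (i + 1) := by exact_mod_cast hKt0 (i + 1)
    rw [hLR b (by omega), ← hPR (i + 1) (by omega)]
    field_simp
  set S : ℕ → ℕ → ℝ := fun i b => if n * (i + 1) ≤ m * b then 0 else
    ((∏ j ∈ Finset.range b, l j : ℕ) : ℝ) / (∏ j ∈ Finset.range (i + 1), (k j : ℝ)) with hS
  refine ⟨S, ?_, B, hB2, ?_⟩
  · intro i hi b hb
    simp only [hS]
    split_ifs with hc
    · simpa using hε
    rw [hratio i hi b hb, abs_of_nonneg (by positivity)]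
    have h1 : (Kb b : ℝ) * Kt (i + 1) ≤ Kp := by
      have h2 : Kb b ∣ Kb (n - 1) := Finset.prod_dvd_prod_of_subset _ _ _
        (Finset.range_subset_range.2 (by omega))
      have h3 : Kt (i + 1) ∣ Kt m := Finset.prod_dvd_prod_of_subset _ _ _
        (Finset.range_subset_range.2 (by omega))
      have h4 : Kb b * Kt (i + 1) ≤ Kp := by
        rw [hKp, mul_comm]
        exact Nat.mul_le_mul (Nat.le_of_dvd (hKt0 _) h3) (Nat.le_of_dvd (hKb0 _) h2)
      exact_mod_cast h4
    have h2 : (B : ℝ) ^ (m * b) * B ≤ (B : ℝ) ^ (n * (i + 1)) := by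
      rw [← pow_succ]
      exact pow_le_pow_right₀ (by exact_mod_cast hB0) (by omega)
    have h3 : (Kp : ℝ) < ε * B := by
      have h4 : (Kp : ℝ) < t * ε := (div_lt_iff₀ hε).1 ht
      have h5 : (t : ℝ) ≤ B := by
        have : t ≤ B := by rw [hB]; nlinarith
        exact_mod_cast this
      nlinarith
    rw [div_lt_iff₀ (by positivity)]
    calc (B : ℝ) ^ (m * b) * Kb b * Kt (i + 1) = (B : ℝ) ^ (m * b) * (Kb b * Kt (i + 1)) := by ring
      _ ≤ (B : ℝ) ^ (m * b) * Kp := by gcongr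
      _ < (B : ℝ) ^ (m * b) * (ε * B) := by gcongr
      _ = ε * ((B : ℝ) ^ (m * b) * B) := by ring
      _ ≤ _ := by gcongr
  · intro x y h1 h2 h3
    set J : ℤ := ∑ b ∈ Finset.range n, ((∏ j ∈ Finset.range b, l j : ℕ) : ℤ) * y b with hJ
    set w : ℕ → ℤ := fun i => x i - ∑ b ∈ Finset.range n, if n * (i + 1) ≤ m * b then
      ((B : ℤ) ^ (m * b - n * (i + 1)) * Kb b * Kt (i + 1)) * y b else 0 with hw
    have hval : ∀ i < m, (x i : ℝ) + ∑ b ∈ Finset.range n, S i b * y b =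
        w i + J / (∏ j ∈ Finset.range (i + 1), (k j : ℝ)) := by
      intro i hi
      simp only [hw, hJ]
      push_cast
      rw [Finset.sum_div, sub_add, ← Finset.sum_sub_distrib, sub_eq_add_neg, ← Finset.sum_neg_distrib]
      congr 1
      apply Finset.sum_congr rfl
      intro b hb
      have hr := hratio i hi b (Finset.mem_range.1 hb)
      push_cast at hr
      simp only [hS]
      split_ifs with hc
      · rw [mul_div_right_comm, hr]
        have h5 : (B : ℝ) ^ (m * b) = (B : ℝ) ^ (m * b - n * (i + 1)) * (B : ℝ) ^ (n * (i + 1)) := by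
          rw [← pow_add]; congr 1; omega
        rw [h5]
        field_simp
        ring
      · push_cast; ring
    have hchain := dvd_chain m k hk0 J w (fun i hi => by
      have h4 := h1 i hi
      rw [hval i hi] at h4
      have h5 : (k i : ℝ) * κ i = (B : ℝ) ^ n := by exact_mod_cast hkκ i hi
      have h6 : (0 : ℝ) < κ i := by exact_mod_cast hκ i
      rw [← h5] at h4
      nlinarith)
    have htop : ∀ i < m, (x i : ℝ) + ∑ b ∈ Finset.range n, S i b * y b = 0 := fun i hi => by
      rw [hval i hi]; exact hchain.2 i hi
    have hy : ∀ b < n, y b = 0 := by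
      refine digits_eq_zero n l hl0 y (by rw [← hkl]; exact hchain.1) ?_
      intro b hb hprev
      by_cases hbn : b < n - 1
      · have := h2 b hbn
        simp only [hl, if_pos hbn]
        have h4 : |y b| < (B : ℤ) ^ m * lam b := by exact_mod_cast this
        push_cast; exact h4
      · have hbe : b = n - 1 := by omega
        subst hbe
        have h4 := h3 htop hprev
        simp only [hl, if_neg hbn]
        have h5 : |y (n - 1)| * (Kp : ℤ) < (B : ℤ) ^ m := by
          rw [hKp]; exact_mod_cast h4
        have h6 : ((B ^ m / Kp : ℕ) : ℤ) * Kp = (B : ℤ) ^ m := by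
          exact_mod_cast Nat.div_mul_cancel hKpB
        rw [← h6] at h5
        exact lt_of_mul_lt_mul_right h5 (by positivity)
    refine ⟨fun i hi => ?_, hy⟩
    have h4 := htop i hi
    rw [Finset.sum_eq_zero (fun b hb => by rw [hy b (Finset.mem_range.1 hb)]; simp), add_zero] at h4
    exact_mod_cast h4

/-! ### Approximation by rows of unimodular integer matrices -/

/-- The integer matrix which is the identity except that row `r` is `b` and row `l` is
`-v e_r + u e_l`, where `u * b r + v * b l = 1`, is invertible. -/
theorem isUnit_bezout_rows {ι : Type*} [Fintype ι] [DecidableEq ι] (r l : ι) (hrl : r ≠ l)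
    (b : ι → ℤ) (u v : ℤ) (huv : u * b r + v * b l = 1) :
    IsUnit ((((1 : Matrix ι ι ℤ).updateRow r b).updateRow l
      (fun j => if j = r then -v else if j = l then u else 0))) := by
  rw [← Matrix.mulVec_surjective_iff_isUnit]
  intro y
  set Y := y r - ∑ j ∈ (Finset.univ.erase r).erase l, b j * y j with hY
  refine ⟨fun j => if j = r then u * Y - b l * y l else if j = l then v * Y + b r * y l else y j, ?_⟩
  funext i
  have hlr : l ≠ r := hrl.symm
  have hlmem : l ∈ Finset.univ.erase r := Finset.mem_erase.2 ⟨hlr, Finset.mem_univ _⟩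
  by_cases hil : i = l
  · subst hil
    simp only [Matrix.mulVec, dotProduct, Matrix.updateRow_self]
    rw [← Finset.add_sum_erase _ _ (Finset.mem_univ r), ← Finset.add_sum_erase _ _ hlmem,
      Finset.sum_eq_zero (s := (Finset.univ.erase r).erase i)]
    · simp only [if_true, if_neg hlr]
      linear_combination (y i) * huv
    · intro j hj
      have h1 := Finset.ne_of_mem_erase hj
      have h2 := Finset.ne_of_mem_erase (Finset.mem_of_mem_erase hj)
      simp [h1, h2]
  · by_cases hir : i = r
    · subst hir
      simp only [Matrix.mulVec, dotProduct, Matrix.updateRow_ne hil, Matrix.updateRow_self]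
      rw [← Finset.add_sum_erase _ _ (Finset.mem_univ i), ← Finset.add_sum_erase _ _ hlmem,
        Finset.sum_congr rfl (g := fun j => b j * y j)]
      · simp only [if_true, if_neg hlr]
        linear_combination Y * huv
      · intro j hj
        have h1 := Finset.ne_of_mem_erase hj
        have h2 := Finset.ne_of_mem_erase (Finset.mem_of_mem_erase hj)
        simp [h1, h2]
    · simp only [Matrix.mulVec, dotProduct, Matrix.updateRow_ne hil, Matrix.updateRow_ne hir]
      rw [Finset.sum_eq_single i]
      · simp [hil, hir]
      · intro j _ hj
        rw [Matrix.one_apply_ne hj.symm, zero_mul]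
      · simp

/-- Simultaneous rational approximation of a real vector with a coprimality condition on two
coordinates. -/
theorem exists_coprime_approx {ι : Type*} [Fintype ι] [DecidableEq ι] (r l : ι) (hrl : r ≠ l)
    (c : ι → ℝ) (η : ℝ) (hη : 0 < η) :
    ∃ (b : ι → ℤ) (K : ℕ), 0 < K ∧ IsCoprime (b r) (b l) ∧ ∀ j, |(b j : ℝ) / K - c j| < η := by
  obtain ⟨K₀, hK₀⟩ := exists_nat_gt (4 / η)
  have hK₀0 : (0 : ℝ) < K₀ := lt_trans (by positivity) hK₀
  have hKη : 4 < η * K₀ := by rw [div_lt_iff₀ hη] at hK₀; linarith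
  set h : ι → ℤ := fun j => if round (c j * K₀) = 0 then 1 else round (c j * K₀) with hh
  have hh0 : ∀ j, h j ≠ 0 := by
    intro j; simp only [hh]; split_ifs with h1
    · exact one_ne_zero
    · exact h1
  have hhb : ∀ j, |(h j : ℝ) - c j * K₀| ≤ 3 / 2 := by
    intro j
    have h1 := abs_sub_round (c j * K₀)
    have h2 : |(h j : ℝ) - round (c j * K₀)| ≤ 1 := by
      simp only [hh]; split_ifs with h3
      · rw [h3]; simp
      · simp
    calc |(h j : ℝ) - c j * K₀| = |((h j : ℝ) - round (c j * K₀)) + -(c j * K₀ - round (c j * K₀))| := by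
          ring_nf
      _ ≤ 1 + 1 / 2 := (abs_add_le _ _).trans (add_le_add h2 (by rwa [abs_neg]))
      _ = 3 / 2 := by norm_num
  set k : ℕ := (h r).natAbs with hk
  have hk0 : 0 < k := Int.natAbs_pos.2 (hh0 r)
  have hk1 : (1 : ℝ) ≤ k := by exact_mod_cast hk0
  have hdvd : h r ∣ (k : ℤ) := Int.dvd_natAbs.2 dvd_rfl
  refine ⟨fun j => if j = l then k * h l + 1 else k * h j, K₀ * k, ?_, ?_, ?_⟩
  · exact Nat.mul_pos (by exact_mod_cast hK₀0) hk0
  · simp only [if_neg hrl, if_true]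
    have h1 : IsCoprime (k : ℤ) (k * h l + 1) := ⟨-h l, 1, by ring⟩
    exact h1.mul_left (h1.of_isCoprime_of_dvd_left hdvd)
  · intro j
    have hden : (0 : ℝ) < K₀ * k := by positivity
    have hform : (((if j = l then k * h l + 1 else k * h j : ℤ) : ℝ)) / ((K₀ * k : ℕ) : ℝ) - c j
        = ((h j - c j * K₀) * k + (if j = l then 1 else 0)) / (K₀ * k) := by
      push_cast
      split_ifs with h1
      · subst h1; field_simp; ring
      · field_simp; ring
    rw [hform, abs_div, abs_of_pos hden, div_lt_iff₀ hden]
    have h2 : |if j = l then (1 : ℝ) else 0| ≤ 1 := by split_ifs <;> simp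
    calc |(h j - c j * K₀) * k + (if j = l then (1 : ℝ) else 0)|
        ≤ |(h j - c j * K₀) * k| + |if j = l then (1 : ℝ) else 0| := abs_add_le _ _
      _ ≤ 3 / 2 * k + 1 := by
          rw [abs_mul, abs_of_pos (by linarith : (0 : ℝ) < k)]
          have := hhb j
          gcongr
      _ ≤ 4 * k := by linarith
      _ < η * (K₀ * k) := by nlinarith

/-- All rows of a real matrix but one can be approximated by rational multiples of the rows of one
unimodular integer matrix. -/
theorem exists_primitive_approx {ι : Type*} [Fintype ι] [DecidableEq ι] (H : Matrix ι ι ℝ)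
    (l : ι) (η : ℝ) (hη : 0 < η) (S : Finset ι) : l ∉ S →
    ∃ (γ : Matrix ι ι ℤ) (K : ι → ℕ), IsUnit γ ∧ (∀ i, 0 < K i) ∧
      ∀ i ∈ S, ∀ j, |(γ i j : ℝ) / K i - H i j| < η := by
  induction S using Finset.induction_on with
  | empty => intro _; exact ⟨1, fun _ => 1, isUnit_one, fun _ => one_pos, by simp⟩
  | insert r S hr ih =>
    intro hl
    have hrl : r ≠ l := fun h => hl (by rw [h]; exact Finset.mem_insert_self _ _)
    have hlS : l ∉ S := fun h => hl (Finset.mem_insert_of_mem h)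
    obtain ⟨γ, K, hγ, hK, hγb⟩ := ih hlS
    have hγdet : IsUnit γ.det := (Matrix.isUnit_iff_isUnit_det _).1 hγ
    -- the coordinates of the new row in the basis formed by the rows of `γ`
    set c : ι → ℝ := fun j => ∑ k, H r k * ((γ⁻¹ k j : ℤ) : ℝ) with hc
    have hcH : ∀ j, ∑ i, c i * (γ i j : ℝ) = H r j := by
      intro j
      have h1 : ∀ k, ∑ i, ((γ⁻¹ k i : ℤ) : ℝ) * (γ i j : ℝ) = if k = j then 1 else 0 := by
        intro k
        have := congrFun (congrFun (Matrix.nonsing_inv_mul γ hγdet) k) j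
        simp only [Matrix.mul_apply, Matrix.one_apply] at this
        exact_mod_cast congrArg (fun x : ℤ => (x : ℝ)) this
      simp only [hc, Finset.sum_mul]
      rw [Finset.sum_comm]
      simp_rw [mul_assoc, ← Finset.mul_sum, h1]
      simp
    set A : ℝ := 1 + ∑ i, ∑ j, |(γ i j : ℝ)| with hA
    have hA0 : 0 < A := by positivity
    obtain ⟨b, K', hK', hcop, hb⟩ := exists_coprime_approx r l hrl c (η / A) (by positivity)
    obtain ⟨u, v, huv⟩ := hcop
    have hU := isUnit_bezout_rows r l hrl b u v huv
    refine ⟨_, fun i => if i = r then K' else K i, hU.mul hγ, ?_, ?_⟩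
    · intro i; dsimp only; split_ifs
      · exact hK'
      · exact hK i
    · intro i hi j
      have hil : i ≠ l := fun h => hl (h ▸ hi)
      by_cases hir : i = r
      · subst hir
        simp only [if_true, Matrix.mul_apply, Matrix.updateRow_ne hil, Matrix.updateRow_self]
        rw [← hcH j]
        push_cast
        rw [Finset.sum_div, ← Finset.sum_sub_distrib]
        calc |∑ k, ((b k : ℝ) * γ k j / K' - c k * γ k j)|
            ≤ ∑ k, |(b k : ℝ) * γ k j / K' - c k * γ k j| := Finset.abs_sum_le_sum_abs _ _
          _ ≤ ∑ k, η / A * |(γ k j : ℝ)| := by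
              apply Finset.sum_le_sum
              intro k _
              have : (b k : ℝ) * γ k j / K' - c k * γ k j = (b k / K' - c k) * γ k j := by ring
              rw [this, abs_mul]
              have := hb k
              gcongr
          _ = η / A * ∑ k, |(γ k j : ℝ)| := by rw [Finset.mul_sum]
          _ ≤ η / A * (A - 1) := by
              rw [hA, add_sub_cancel_left]
              gcongr with k
              exact Finset.single_le_sum (f := fun j => |(γ k j : ℝ)|) (fun _ _ => abs_nonneg _)
                (Finset.mem_univ j)
          _ < η / A * A := by
              have : 0 < η / A := by positivity
              nlinarith
          _ = η := div_mul_cancel₀ _ hA0.ne'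
      · have hiS : i ∈ S := Finset.mem_of_mem_insert_of_ne hi hir
        simp only [if_neg hir]
        have : ((((1 : Matrix ι ι ℤ).updateRow r b).updateRow l
            (fun j => if j = r then -v else if j = l then u else 0)) * γ) i j = γ i j := by
          simp only [Matrix.mul_apply, Matrix.updateRow_ne hil, Matrix.updateRow_ne hir]
          simp [Matrix.one_apply]
        rw [this]
        exact hγb i hiS j

/-! ### Perturbing a lattice so that it misses a box -/

/-- The lattice `G ℤ^(m+n)`, expanded by `s ^ n` in the first `m` coordinates and contracted by `s ^ m`
in the last `n`, has no nonzero vector in the open unit box. -/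
def MissesBox {m n : ℕ} (G : Matrix (Fin m ⊕ Fin n) (Fin m ⊕ Fin n) ℝ) (s : ℝ) : Prop :=
  ∀ z : Fin m ⊕ Fin n → ℤ, (∀ i, |(G.mulVec fun j => (z j : ℝ)) (Sum.inl i)| * s ^ n < 1) →
    (∀ b, |(G.mulVec fun j => (z j : ℝ)) (Sum.inr b)| < s ^ m) → z = 0

/-- Entrywise closeness extracted from continuity of a matrix-valued function. -/
theorem exists_entry_close {ι κ α : Type*} [Fintype ι] [Fintype κ] [PseudoMetricSpace α]
    (f : α → Matrix ι κ ℝ) (x : α) (hf : ContinuousAt f x) (η : ℝ) (M : Matrix ι κ ℝ)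
    (hη : ∀ i j, |f x i j - M i j| < η) :
    ∃ ε > 0, ∀ y, dist y x < ε → ∀ i j, |f y i j - M i j| < η := by
  have h : ∀ᶠ y in nhds x, ∀ i j, |f y i j - M i j| < η := by
    rw [Filter.eventually_all]
    intro i
    rw [Filter.eventually_all]
    intro j
    have h1 : ContinuousAt (fun y => |f y i j - M i j|) x := by
      have h2 : ContinuousAt (fun y => f y i j) x :=
        continuousAt_pi.1 (continuousAt_pi.1 hf i) j
      exact (h2.sub continuousAt_const).abs
    exact h1.eventually_lt continuousAt_const (hη i j)
  obtain ⟨ε, hε, hball⟩ := Metric.eventually_nhds_iff.1 h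
  exact ⟨ε, hε, fun y hy => hball hy⟩

theorem det_diagonal_updateRow {ι : Type*} [Fintype ι] [DecidableEq ι] (D τ : ι → ℝ) (l : ι) :
    ((Matrix.diagonal D).updateRow l τ).det = (∏ j ∈ Finset.univ.erase l, D j) * τ l := by
  rw [← Matrix.cramer_transpose_apply, Matrix.diagonal_transpose, Matrix.cramer_eq_adjugate_mulVec,
    Matrix.adjugate_diagonal, Matrix.mulVec_diagonal]

/-- Arbitrarily close to a unimodular lattice there is one which misses the unit box after applying
the diagonal flow for some time. -/
theorem exists_close_missesBox {m n : ℕ} (hm : 0 < m) (hn : 0 < n)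
    (H : Matrix (Fin m ⊕ Fin n) (Fin m ⊕ Fin n) ℝ) (hH : |H.det| = 1) (η : ℝ) (hη : 0 < η) :
    ∃ (H' : Matrix (Fin m ⊕ Fin n) (Fin m ⊕ Fin n) ℝ) (B : ℕ), 2 ≤ B ∧
      (∀ i j, |(H' * H⁻¹) i j - (1 : Matrix (Fin m ⊕ Fin n) (Fin m ⊕ Fin n) ℝ) i j| < η) ∧
      MissesBox H' B := by
  classical
  have hHdet : H.det ≠ 0 := by intro h; rw [h] at hH; simp at hH
  have hHu : IsUnit H.det := isUnit_iff_ne_zero.2 hHdet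
  set l : Fin m ⊕ Fin n := Sum.inr ⟨n - 1, by omega⟩ with hl
  -- normalise the determinant by rescaling row `l`
  set Φ : (Fin m ⊕ Fin n → Fin m ⊕ Fin n → ℝ) → Matrix (Fin m ⊕ Fin n) (Fin m ⊕ Fin n) ℝ :=
    fun X => (Matrix.of X).updateRow l (|(Matrix.of X).det|⁻¹ • X l) with hΦ
  have hcontdet : Continuous fun X : Fin m ⊕ Fin n → Fin m ⊕ Fin n → ℝ => (Matrix.of X).det :=
    Continuous.matrix_det continuous_id
  have hΦcont : ContinuousAt (fun X => Φ X * H⁻¹) H := by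
    have h1 : ContinuousAt Φ H := by
      have h2 : ContinuousAt (fun X : Fin m ⊕ Fin n → Fin m ⊕ Fin n → ℝ =>
          |(Matrix.of X).det|⁻¹) H := by
        refine ContinuousAt.inv₀ (hcontdet.abs.continuousAt) ?_
        rw [show |(Matrix.of H).det| = 1 from hH]; exact one_ne_zero
      have h3 : ContinuousAt (fun X : Fin m ⊕ Fin n → Fin m ⊕ Fin n → ℝ =>
          |(Matrix.of X).det|⁻¹ • X l) H := h2.smul (continuous_apply l).continuousAt
      have h4 : ContinuousAt (fun X : Fin m ⊕ Fin n → Fin m ⊕ Fin n → ℝ => X) H :=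
        continuousAt_id
      exact h4.update l h3
    exact (Continuous.matrix_mul continuous_id continuous_const).continuousAt.comp h1
  have hΦH : Φ H = H := by
    have : Φ H = H.updateRow l (|H.det|⁻¹ • H l) := rfl
    rw [this, hH, inv_one, one_smul, Matrix.updateRow_eq_self]
  obtain ⟨ε₁, hε₁, hclose⟩ := exists_entry_close (fun X => Φ X * H⁻¹) H hΦcont η 1 (by
    intro i j; rw [hΦH, Matrix.mul_nonsing_inv _ hHu]; simpa using hη)
  have hdetne : ∀ᶠ X in nhds (H : Fin m ⊕ Fin n → Fin m ⊕ Fin n → ℝ), (Matrix.of X).det ≠ 0 :=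
    hcontdet.continuousAt.eventually_ne hHdet
  obtain ⟨ε₂, hε₂, hdetne⟩ := Metric.eventually_nhds_iff.1 hdetne
  obtain ⟨γ, K, hγ, hK, hγb⟩ := exists_primitive_approx H l (min ε₁ ε₂) (lt_min hε₁ hε₂)
    (Finset.univ.erase l) (by simp)
  have hγdet : IsUnit γ.det := (Matrix.isUnit_iff_isUnit_det _).1 hγ
  set X : Fin m ⊕ Fin n → Fin m ⊕ Fin n → ℝ :=
    fun i j => if i = l then H i j else (γ i j : ℝ) / K i with hX
  have hXd : dist X H < min ε₁ ε₂ := by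
    have h0 := lt_min hε₁ hε₂
    refine (dist_pi_lt_iff h0).2 fun i => (dist_pi_lt_iff h0).2 fun j => ?_
    simp only [hX, Real.dist_eq]
    split_ifs with h1
    · simpa using h0
    · exact hγb i (Finset.mem_erase.2 ⟨h1, Finset.mem_univ _⟩) j
  have hXdet : (Matrix.of X).det ≠ 0 := hdetne (hXd.trans_le (min_le_right _ _))
  have hΦX := hclose X (hXd.trans_le (min_le_left _ _))
  have hΦdet : |(Φ X).det| = 1 := by
    have : (Φ X).det = |(Matrix.of X).det|⁻¹ * (Matrix.of X).det := by
      simp only [hΦ]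
      rw [Matrix.det_updateRow_smul]
      congr 2
      exact Matrix.updateRow_eq_self _ _
    rw [this, abs_mul, abs_inv, abs_abs, inv_mul_cancel₀ (abs_ne_zero.2 hXdet)]
  set γR : Matrix (Fin m ⊕ Fin n) (Fin m ⊕ Fin n) ℝ := γ.map (fun x : ℤ => (x : ℝ)) with hγR
  set γI : Matrix (Fin m ⊕ Fin n) (Fin m ⊕ Fin n) ℝ := γ⁻¹.map (fun x : ℤ => (x : ℝ)) with hγI
  have hRI : γR * γI = 1 := by
    ext i j
    have := congrFun (congrFun (Matrix.mul_nonsing_inv γ hγdet) i) j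
    simp only [Matrix.mul_apply, Matrix.one_apply] at this
    simp only [hγR, hγI, Matrix.mul_apply, Matrix.one_apply, Matrix.map_apply]
    exact_mod_cast congrArg (fun x : ℤ => (x : ℝ)) this
  have hIR : γI * γR = 1 := mul_eq_one_comm.1 hRI
  have hγRdet : |γR.det| = 1 := by
    rw [← (show (γ.det : ℝ) = _ from Int.cast_det (R := ℝ) γ), ← Int.cast_abs,
      Int.isUnit_iff_abs_eq.1 hγdet]
    simp
  set T := Φ X * γI with hT
  have hTdet : |T.det| = 1 := by
    have h1 : |γR.det| * |γI.det| = 1 := by rw [← abs_mul, ← Matrix.det_mul, hRI]; simp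
    rw [hγRdet, one_mul] at h1
    rw [hT, Matrix.det_mul, abs_mul, hΦdet, h1, one_mul]
  have hTγ : T * γR = Φ X := by rw [hT, Matrix.mul_assoc, hIR, Matrix.mul_one]
  have hTrow : ∀ i, i ≠ l → ∀ j, T i j = if i = j then (K i : ℝ)⁻¹ else 0 := by
    intro i hi j
    have h1 := congrFun (congrFun hRI i) j
    simp only [Matrix.mul_apply, Matrix.one_apply, hγR, Matrix.map_apply] at h1
    simp only [hT, hΦ, Matrix.mul_apply, Matrix.updateRow_ne hi, Matrix.of_apply, hX, if_neg hi]
    calc ∑ k, (γ i k : ℝ) / K i * γI k j = (K i : ℝ)⁻¹ * ∑ k, (γ i k : ℝ) * γI k j := by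
          rw [Finset.mul_sum]; exact Finset.sum_congr rfl fun k _ => by ring
      _ = _ := by rw [h1]; split_ifs <;> simp
  have hTll : |T l l| = ∏ j ∈ Finset.univ.erase l, (K j : ℝ) := by
    have h1 : T = (Matrix.diagonal fun i => (K i : ℝ)⁻¹).updateRow l (T l) := by
      ext i j
      by_cases hi : i = l
      · subst hi; rw [Matrix.updateRow_self]
      · rw [Matrix.updateRow_ne hi, hTrow i hi j, Matrix.diagonal_apply]
    rw [h1, det_diagonal_updateRow, abs_mul, Finset.prod_inv_distrib, abs_inv] at hTdet
    have h2 : (0 : ℝ) < ∏ j ∈ Finset.univ.erase l, (K j : ℝ) :=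
      Finset.prod_pos fun j _ => by exact_mod_cast hK j
    rw [abs_of_pos h2] at hTdet
    field_simp at hTdet
    exact hTdet
  -- perturb by a small unipotent matrix
  set U : (Fin m → Fin n → ℝ) → Matrix (Fin m ⊕ Fin n) (Fin m ⊕ Fin n) ℝ :=
    fun S => Matrix.fromBlocks 1 (Matrix.of S) 0 1 with hU
  have hUcont : Continuous fun S => T * U S * γR * H⁻¹ := by
    have : Continuous U :=
      Continuous.matrix_fromBlocks continuous_const continuous_id continuous_const continuous_const
    exact ((continuous_const.matrix_mul this).matrix_mul continuous_const).matrix_mul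
      continuous_const
  obtain ⟨ε, hε, hUclose⟩ := exists_entry_close _ (0 : Fin m → Fin n → ℝ) hUcont.continuousAt η 1 (by
    have : U 0 = 1 := by
      simp only [hU]
      exact Matrix.fromBlocks_one
    intro i j
    rw [this, Matrix.mul_one, hTγ]
    exact hΦX i j)
  obtain ⟨S, hS, B, hB, hmiss⟩ := diagonal_avoid m n hm hn
    (fun i => if h : i < m then K (Sum.inl ⟨i, h⟩) else 1)
    (fun i => if h : i < n then K (Sum.inr ⟨i, h⟩) else 1)
    (fun i => by split_ifs; exacts [hK _, one_pos])
    (fun i => by split_ifs; exacts [hK _, one_pos]) ε hε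
  set S' : Fin m → Fin n → ℝ := fun i b => S i b with hS'
  refine ⟨T * U S' * γR, B, hB, hUclose S' ?_, ?_⟩
  · rw [dist_pi_lt_iff hε]; intro i
    rw [dist_pi_lt_iff hε]; intro b
    simp only [hS', Pi.zero_apply, dist_zero_right, Real.norm_eq_abs]
    exact hS i i.2 b b.2
  · intro z htop hbot
    set ζ := γ.mulVec z with hζ
    have hζR : γR.mulVec (fun j => (z j : ℝ)) = fun j => (ζ j : ℝ) := by
      ext j; simp [hζ, hγR, Matrix.mulVec, dotProduct]
    set v := (U S').mulVec (fun j => (ζ j : ℝ)) with hv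
    have hGz : (T * U S' * γR).mulVec (fun j => (z j : ℝ)) = T.mulVec v := by
      rw [← Matrix.mulVec_mulVec, hζR, ← Matrix.mulVec_mulVec]
    rw [hGz] at htop hbot
    have hvtop : ∀ i, v (Sum.inl i) = ζ (Sum.inl i) + ∑ b : Fin n, S i b * ζ (Sum.inr b) := by
      intro i
      simp [hv, hU, Matrix.mulVec, dotProduct, Matrix.one_apply, hS']
    have hvbot : ∀ b, v (Sum.inr b) = ζ (Sum.inr b) := by
      intro i
      simp [hv, hU, Matrix.mulVec, dotProduct, Matrix.one_apply]
    have hTv : ∀ i, i ≠ l → T.mulVec v i = (K i : ℝ)⁻¹ * v i := by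
      intro i hi
      simp only [Matrix.mulVec, dotProduct, hTrow i hi]
      simp
    have hζ0 : ζ = 0 := by
      set x : ℕ → ℤ := fun i => if h : i < m then ζ (Sum.inl ⟨i, h⟩) else 0 with hx
      set y : ℕ → ℤ := fun i => if h : i < n then ζ (Sum.inr ⟨i, h⟩) else 0 with hy
      have hxi : ∀ i : Fin m, x i = ζ (Sum.inl i) := fun i => by simp [hx]
      have hyi : ∀ i : Fin n, y i = ζ (Sum.inr i) := fun i => by simp [hy]
      have hsum : ∀ i : Fin m, (x i : ℝ) + ∑ b ∈ Finset.range n, S i b * y b = v (Sum.inl i) := by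
        intro i
        rw [hvtop, hxi, ← Fin.sum_univ_eq_sum_range (fun b => S i b * (y b : ℝ))]
        simp only [hyi]
      obtain ⟨h1, h2⟩ := hmiss x y (by
          intro i hi
          have h1 := hsum ⟨i, hi⟩
          simp only at h1
          rw [h1]
          have h2 := htop ⟨i, hi⟩
          rw [hTv _ (by rw [hl]; exact Sum.inl_ne_inr), abs_mul, abs_inv] at h2
          have h3 : (0 : ℝ) < K (Sum.inl ⟨i, hi⟩) := by exact_mod_cast hK _
          rw [abs_of_pos h3, mul_assoc, inv_mul_lt_iff₀ h3, mul_one] at h2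
          simpa [hi] using h2) (by
          intro j hj
          have hjn : j < n := by omega
          have h2 := hbot ⟨j, hjn⟩
          rw [hTv _ (by rw [hl, Ne, Sum.inr.injEq, Fin.mk.injEq]; omega), abs_mul, abs_inv,
            hvbot] at h2
          have h3 : (0 : ℝ) < K (Sum.inr ⟨j, hjn⟩) := by exact_mod_cast hK _
          rw [abs_of_pos h3, inv_mul_lt_iff₀ h3, mul_comm] at h2
          simpa [hjn, hy] using h2) (by
          intro hx0 hy0
          have h2 := hbot ⟨n - 1, by omega⟩
          have h3 : T.mulVec v l = T l l * v l := by
            simp only [Matrix.mulVec, dotProduct]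
            refine Finset.sum_eq_single l (fun j _ hj => ?_) (by simp)
            have : v j = 0 := by
              rcases j with i | b
              · rw [← hsum i]; exact hx0 i i.2
              · have hb : (b : ℕ) < n - 1 := by
                  have h4 : (b : ℕ) ≠ n - 1 := fun h => hj (by rw [hl]; congr 1; ext; exact h)
                  omega
                rw [hvbot, ← hyi, hy0 b hb]; simp
            rw [this, mul_zero]
          rw [← hl, h3, abs_mul, hTll, hl, hvbot] at h2
          have h5 : ∏ j ∈ Finset.univ.erase l, (K j : ℝ) =
              ((∏ i ∈ Finset.range m, (if h : i < m then K (Sum.inl ⟨i, h⟩) else 1) : ℕ) *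
              (∏ j ∈ Finset.range (n - 1), (if h : j < n then K (Sum.inr ⟨j, h⟩) else 1) : ℕ) : ℝ) := by
            have hKl : (0 : ℝ) < K l := by exact_mod_cast hK l
            apply mul_left_cancel₀ hKl.ne'
            rw [Finset.mul_prod_erase Finset.univ (fun j => (K j : ℝ)) (Finset.mem_univ l), Fintype.prod_sum_type]
            have h6 : (∏ b : Fin n, (K (Sum.inr b) : ℝ)) = K l *
                (∏ j ∈ Finset.range (n - 1), (if h : j < n then K (Sum.inr ⟨j, h⟩) else 1) : ℕ) := by
              have h7 : ∏ b : Fin n, (K (Sum.inr b) : ℝ) = ∏ j ∈ Finset.range n,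
                  ((if h : j < n then K (Sum.inr ⟨j, h⟩) else 1 : ℕ) : ℝ) := by
                rw [← Fin.prod_univ_eq_prod_range (fun j =>
                  ((if h : j < n then K (Sum.inr ⟨j, h⟩) else 1 : ℕ) : ℝ))]
                simp
              rw [h7]
              obtain ⟨n', rfl⟩ : ∃ n', n = n' + 1 := ⟨n - 1, by omega⟩
              rw [Finset.prod_range_succ, mul_comm]
              push_cast
              simp [hl]
            have h8 : (∏ i : Fin m, (K (Sum.inl i) : ℝ)) =
                (∏ i ∈ Finset.range m, (if h : i < m then K (Sum.inl ⟨i, h⟩) else 1) : ℕ) := by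
              rw [Nat.cast_prod, ← Fin.prod_univ_eq_prod_range (fun j =>
                  ((if h : j < m then K (Sum.inl ⟨j, h⟩) else 1 : ℕ) : ℝ))]
              simp
            rw [h6, h8]; ring
          rw [h5] at h2
          have h9 : y (n - 1) = ζ (Sum.inr ⟨n - 1, by omega⟩) := hyi ⟨n - 1, by omega⟩
          rw [h9, mul_comm]
          push_cast at h2 ⊢
          exact h2)
      ext j
      rcases j with i | b
      · rw [← hxi, h1 i i.2]; rfl
      · rw [← hyi, h2 b b.2]; rfl
    have hz : γ⁻¹.mulVec ζ = z := by
      rw [hζ, Matrix.mulVec_mulVec, Matrix.nonsing_inv_mul _ hγdet, Matrix.one_mulVec]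
    rw [← hz, hζ0, Matrix.mulVec_zero]

/-! ### The lattice attached to a matrix -/

/-- `exists_close_missesBox` with a bound on the flow time that is uniform over bounded unimodular
matrices. -/
theorem exists_uniform_missesBox {m n : ℕ} (hm : 0 < m) (hn : 0 < n) (ρ η : ℝ) (hη : 0 < η) :
    ∃ S : ℕ, ∀ H : Matrix (Fin m ⊕ Fin n) (Fin m ⊕ Fin n) ℝ, (∀ i j, |H i j| ≤ ρ) →
      |H.det| = 1 → ∃ (E : Matrix (Fin m ⊕ Fin n) (Fin m ⊕ Fin n) ℝ) (s : ℕ),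
        (∀ i j, |E i j| < η) ∧ 2 ≤ s ∧ s ≤ S ∧ MissesBox ((1 + E) * H) s := by
  classical
  let V := Fin m ⊕ Fin n → Fin m ⊕ Fin n → ℝ
  let K : Set V := {X | (∀ i j, X i j ∈ Set.Icc (-ρ) ρ) ∧ |(Matrix.of X).det| = 1}
  have hcontdet : Continuous fun X : V => (Matrix.of X).det := Continuous.matrix_det continuous_id
  have hK : IsCompact K := by
    have h1 : IsCompact (Set.univ.pi fun _ : Fin m ⊕ Fin n =>
        (Set.univ.pi fun _ : Fin m ⊕ Fin n => Set.Icc (-ρ) ρ)) :=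
      isCompact_univ_pi fun _ => isCompact_univ_pi fun _ => isCompact_Icc
    have h2 : IsClosed {X : V | |(Matrix.of X).det| = 1} :=
      isClosed_eq hcontdet.abs continuous_const
    have h3 : K = (Set.univ.pi fun _ : Fin m ⊕ Fin n =>
        (Set.univ.pi fun _ : Fin m ⊕ Fin n => Set.Icc (-ρ) ρ)) ∩
        {X : V | |(Matrix.of X).det| = 1} := by
      ext X
      exact ⟨fun h => ⟨fun i _ j _ => h.1 i j, h.2⟩,
        fun h => ⟨fun i j => h.1 i (Set.mem_univ i) j (Set.mem_univ j), h.2⟩⟩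
    rw [h3]; exact h1.inter_right h2
  have key : ∃ S : ℕ, ∀ H ∈ K, ∃ (E : Matrix (Fin m ⊕ Fin n) (Fin m ⊕ Fin n) ℝ) (s : ℕ),
        (∀ i j, |E i j| < η) ∧ 2 ≤ s ∧ s ≤ S ∧ MissesBox ((1 + E) * Matrix.of H) s := by
    refine hK.induction_on (p := fun A => ∃ S : ℕ, ∀ H ∈ A,
      ∃ (E : Matrix (Fin m ⊕ Fin n) (Fin m ⊕ Fin n) ℝ) (s : ℕ),
        (∀ i j, |E i j| < η) ∧ 2 ≤ s ∧ s ≤ S ∧ MissesBox ((1 + E) * Matrix.of H) s) ?_ ?_ ?_ ?_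
    · exact ⟨0, by simp⟩
    · rintro A B hAB ⟨S, hS⟩
      exact ⟨S, fun H hH => hS H (hAB hH)⟩
    · rintro A B ⟨S, hS⟩ ⟨S', hS'⟩
      refine ⟨max S S', fun H hH => ?_⟩
      rcases hH with hH | hH
      · obtain ⟨E, s, h1, h2, h3, h4⟩ := hS H hH
        exact ⟨E, s, h1, h2, h3.trans (le_max_left _ _), h4⟩
      · obtain ⟨E, s, h1, h2, h3, h4⟩ := hS' H hH
        exact ⟨E, s, h1, h2, h3.trans (le_max_right _ _), h4⟩
    · intro X hX
      have hdet : (Matrix.of X).det ≠ 0 := by intro h; have := hX.2; rw [h] at this; simp at this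
      obtain ⟨H', B, hB, hclose, hmiss⟩ := exists_close_missesBox hm hn (Matrix.of X) hX.2 η hη
      have hinv : ContinuousAt (fun Y : V => H' * (Matrix.of Y)⁻¹) X := by
        have h1 : ContinuousAt (fun Y : V => (Matrix.of Y)⁻¹) X := by
          simp only [Matrix.inv_def, Ring.inverse_eq_inv']
          exact (hcontdet.continuousAt.inv₀ hdet).smul
            (Continuous.matrix_adjugate continuous_id).continuousAt
        exact (Continuous.matrix_mul continuous_const continuous_id).continuousAt.comp h1
      obtain ⟨ε, hε, hball⟩ := exists_entry_close _ X hinv η 1 hclose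
      have hev : ∀ᶠ Y in nhds X, (Matrix.of Y).det ≠ 0 ∧ dist Y X < ε :=
        (hcontdet.continuousAt.eventually_ne hdet).and (Metric.ball_mem_nhds X hε)
      refine ⟨{Y | (Matrix.of Y).det ≠ 0 ∧ dist Y X < ε}, mem_nhdsWithin_of_mem_nhds hev, B, ?_⟩
      rintro Y ⟨hY, hYX⟩
      refine ⟨H' * (Matrix.of Y)⁻¹ - 1, B, fun i j => hball Y hYX i j, hB, le_rfl, ?_⟩
      rw [add_sub_cancel, Matrix.mul_assoc, Matrix.nonsing_inv_mul _ (isUnit_iff_ne_zero.2 hY),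
        Matrix.mul_one]
      exact hmiss
  obtain ⟨S, hS⟩ := key
  refine ⟨S, fun H hH hdet => hS H ⟨fun i j => abs_le.1 (hH i j), hdet⟩⟩

/-- The error vector `Y q - p`. -/
def lin {m n : ℕ} (Y : Fin m → Fin n → ℝ) (p : Fin m → ℤ) (q : Fin n → ℤ) (a : Fin m) : ℝ :=
  (∑ b, Y a b * (q b : ℝ)) - p a

/-- The only integer solution of `‖Y q - p‖ < α τ⁻ⁿ`, `‖q‖ < β τᵐ` is the trivial one.
`Av Y τ c 1` says that `Y` violates the `c`-improved Dirichlet inequality for `N = τ ^ m`, and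
`Av Y τ a⁻¹ a⁻¹` that `Y` has distortion at most `a` at time `τ`. -/
def Av {m n : ℕ} (Y : Fin m → Fin n → ℝ) (τ α β : ℝ) : Prop :=
  ∀ (p : Fin m → ℤ) (q : Fin n → ℤ), (∀ a, τ ^ n * |lin Y p q a| < α) →
    (∀ b, |(q b : ℝ)| < β * τ ^ m) → p = 0 ∧ q = 0

/-- The unimodular lattice attached to `Y` at time `τ`: the images of the vectors `(Y q - p, q)` under
`diag(τⁿ, …, τ⁻ᵐ)`. -/
noncomputable def latG {m n : ℕ} (Y : Fin m → Fin n → ℝ) (τ : ℝ) : Matrix (Fin m ⊕ Fin n) (Fin m ⊕ Fin n) ℝ :=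
  Matrix.fromBlocks (Matrix.diagonal fun _ => -τ ^ n) (Matrix.of fun a b => τ ^ n * Y a b) 0
    (Matrix.diagonal fun _ => (τ ^ m)⁻¹)

theorem latG_det {m n : ℕ} (Y : Fin m → Fin n → ℝ) (τ : ℝ) (hτ : 0 < τ) :
    |(latG Y τ).det| = 1 := by
  rw [latG, Matrix.det_fromBlocks_zero₂₁, Matrix.det_diagonal, Matrix.det_diagonal]
  simp only [Finset.prod_const, Finset.card_univ, Fintype.card_fin, abs_mul, abs_pow, abs_neg,
    abs_inv, abs_of_pos hτ]
  rw [inv_pow, ← pow_mul, ← pow_mul, mul_comm m n]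
  exact mul_inv_cancel₀ (by positivity)

theorem latG_inl {m n : ℕ} (Y : Fin m → Fin n → ℝ) (τ : ℝ) (z : Fin m ⊕ Fin n → ℤ) (a : Fin m) :
    ((latG Y τ).mulVec fun j => (z j : ℝ)) (Sum.inl a) =
      τ ^ n * lin Y (fun i => z (Sum.inl i)) (fun b => z (Sum.inr b)) a := by
  simp only [latG, Matrix.mulVec, dotProduct, Fintype.sum_sum_type, Matrix.fromBlocks_apply₁₁,
    Matrix.fromBlocks_apply₁₂, Matrix.diagonal_apply, Matrix.of_apply, lin, ite_mul, zero_mul,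
    Finset.sum_ite_eq, Finset.mem_univ, if_true, mul_sub, Finset.mul_sum, mul_assoc]
  ring

theorem latG_inr {m n : ℕ} (Y : Fin m → Fin n → ℝ) (τ : ℝ) (z : Fin m ⊕ Fin n → ℤ) (b : Fin n) :
    ((latG Y τ).mulVec fun j => (z j : ℝ)) (Sum.inr b) = (τ ^ m)⁻¹ * z (Sum.inr b) := by
  simp [latG, Matrix.mulVec, dotProduct, Fintype.sum_sum_type, Matrix.diagonal_apply]

/-- The lattice of a point of distortion at most `a` has no nonzero vector shorter than `a⁻¹`. -/
theorem Av.latG_short {m n : ℕ} {Y : Fin m → Fin n → ℝ} {τ a : ℝ} (hτ : 0 < τ)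
    (h : Av Y τ a⁻¹ a⁻¹) (z : Fin m ⊕ Fin n → ℤ) (hz : z ≠ 0) :
    ∃ i, a⁻¹ ≤ |((latG Y τ).mulVec fun j => (z j : ℝ)) i| := by
  by_contra hcon
  push Not at hcon
  apply hz
  obtain ⟨h1, h2⟩ := h (fun i => z (Sum.inl i)) (fun b => z (Sum.inr b)) (fun i => by
    have := hcon (Sum.inl i)
    rwa [latG_inl, abs_mul, abs_of_pos (pow_pos hτ n)] at this) (fun b => by
    have := hcon (Sum.inr b)
    rwa [latG_inr, abs_mul, abs_inv, abs_of_pos (pow_pos hτ m), inv_mul_lt_iff₀ (pow_pos hτ m),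
      mul_comm] at this)
  ext j
  rcases j with i | b
  · exact congrFun h1 i
  · exact congrFun h2 b

/-- A solution `Z` of the fixed-point equation `Z + E₁ Z = E₂` for small `E₁`, `E₂`. -/
theorem exists_small_solution {m n : ℕ} (E₁ : Fin m → Fin m → ℝ) (E₂ : Fin m → Fin n → ℝ) (η : ℝ)
    (hE₁ : ∀ i j, |E₁ i j| ≤ η) (hE₂ : ∀ i j, |E₂ i j| ≤ η) (hmη : m * η ≤ 1 / 2) :
    ∃ Z : Fin m → Fin n → ℝ, (∀ i b, Z i b + ∑ j, E₁ i j * Z j b = E₂ i b) ∧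
      ∀ i b, |Z i b| ≤ 2 * η := by
  classical
  rcases Nat.eq_zero_or_pos m with rfl | hm
  · exact ⟨fun i => i.elim0, fun i => i.elim0, fun i => i.elim0⟩
  have : Nonempty (Fin m) := ⟨⟨0, hm⟩⟩
  set A : Matrix (Fin m) (Fin m) ℝ := 1 + Matrix.of E₁ with hA
  have hη : 0 ≤ η := (abs_nonneg _).trans (hE₁ ⟨0, hm⟩ ⟨0, hm⟩)
  have bound : ∀ (v w : Fin m → ℝ), (∀ i, v i + ∑ j, E₁ i j * v j = w i) → ∀ M, (∀ i, |w i| ≤ M) →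
      ∀ i, |v i| ≤ 2 * M := by
    intro v w hvw M hM i
    obtain ⟨k, -, hk⟩ := Finset.exists_max_image Finset.univ (fun i => |v i|) Finset.univ_nonempty
    have h1 : |∑ j, E₁ k j * v j| ≤ m * η * |v k| := by
      calc |∑ j, E₁ k j * v j| ≤ ∑ j, |E₁ k j * v j| := Finset.abs_sum_le_sum_abs _ _
        _ ≤ ∑ _j : Fin m, η * |v k| := Finset.sum_le_sum fun j _ => by
            rw [abs_mul]
            exact mul_le_mul (hE₁ k j) (hk j (Finset.mem_univ _)) (abs_nonneg _) hη
        _ = m * η * |v k| := by simp [mul_assoc]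
    have h2 : |v k| ≤ |w k| + |∑ j, E₁ k j * v j| := by
      have : v k = w k - ∑ j, E₁ k j * v j := by rw [← hvw k]; ring
      rw [this]; exact abs_sub _ _
    have h3 := hM k
    have h4 := hk i (Finset.mem_univ _)
    have h5 : m * η * |v k| ≤ 1 / 2 * |v k| := mul_le_mul_of_nonneg_right hmη (abs_nonneg _)
    linarith
  have hdet : A.det ≠ 0 := by
    intro h0
    obtain ⟨v, hv0, hv⟩ := Matrix.exists_mulVec_eq_zero_iff.2 h0
    apply hv0
    ext i
    have := bound v 0 (fun i => by
      have := congrFun hv i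
      rw [hA, Matrix.add_mulVec, Matrix.one_mulVec] at this
      simpa [Matrix.mulVec, dotProduct] using this) 0 (fun i => by simp) i
    simpa using this
  set Z : Matrix (Fin m) (Fin n) ℝ := A⁻¹ * Matrix.of E₂ with hZ
  have hAZ : A * Z = Matrix.of E₂ := by
    rw [hZ, ← Matrix.mul_assoc, Matrix.mul_nonsing_inv _ (isUnit_iff_ne_zero.2 hdet), Matrix.one_mul]
  have hZeq : ∀ i b, Z i b + ∑ j, E₁ i j * Z j b = E₂ i b := by
    intro i b
    have := congrFun (congrFun hAZ i) b
    rw [hA, Matrix.add_mul, Matrix.one_mul] at this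
    simpa [Matrix.mul_apply] using this
  exact ⟨Z, hZeq, fun i b => bound (fun i => Z i b) (fun i => E₂ i b) (fun i => hZeq i b) η
    (fun i => hE₂ i b) i⟩

/-! ### Balls on which Dirichlet's inequality cannot be improved -/

/-- A contraction `t` of the time and a relative perturbation `ν` that are both paid for by `c < 1`. -/
theorem exists_time_and_slack (c : ℝ) (hc0 : 0 < c) (hc1 : c < 1) (n : ℕ) (hn : 0 < n) :
    ∃ t ν : ℝ, 1 / 2 ≤ t ∧ t < 1 ∧ 0 < ν ∧ ν ≤ 1 / 8 ∧ 4 * ν ≤ 1 - t ∧ c ≤ (1 - 4 * ν) * t ^ n := by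
  have hn' : (1 : ℝ) ≤ n := by exact_mod_cast hn
  set u : ℝ := (1 - c) / (2 * n) with hu
  have hu0 : 0 < u := by rw [hu]; apply div_pos <;> linarith
  have hnu : n * u = (1 - c) / 2 := by rw [hu]; field_simp
  have hu1 : u ≤ 1 / 2 := by nlinarith
  have h1 := one_add_mul_le_pow (a := -u) (by linarith) n
  have h2 : (1 + c) / 2 ≤ (1 - u) ^ n := by
    rw [← sub_eq_add_neg] at h1
    linarith
  refine ⟨1 - u, min (u / 4) ((1 - c) / 8), by linarith, by linarith,
    lt_min (by linarith) (by linarith), ?_, ?_, ?_⟩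
  · exact (min_le_left _ _).trans (by linarith)
  · linarith [min_le_left (u / 4) ((1 - c) / 8)]
  · have h3 : 1 - (1 - c) / 2 ≤ 1 - 4 * min (u / 4) ((1 - c) / 8) := by
      linarith [min_le_right (u / 4) ((1 - c) / 8)]
    calc c ≤ (1 - (1 - c) / 2) * ((1 + c) / 2) := by nlinarith
      _ ≤ _ := mul_le_mul h3 h2 (by linarith) (by linarith)

theorem abs_sum_mul_le {m : ℕ} (f g : Fin m → ℝ) (η M : ℝ) (hη : 0 ≤ η) (hf : ∀ i, |f i| ≤ η)
    (hg : ∀ i, |g i| ≤ M) : |∑ i, f i * g i| ≤ m * η * M := by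
  calc |∑ i, f i * g i| ≤ ∑ i, |f i * g i| := Finset.abs_sum_le_sum_abs _ _
    _ ≤ ∑ _i : Fin m, η * M := Finset.sum_le_sum fun i _ => by
        rw [abs_mul]
        exact mul_le_mul (hf i) (hg i) (abs_nonneg _) hη
    _ = m * η * M := by simp [mul_assoc]

/-- Missing the box depends on the lattice only, not on its basis. -/
theorem missesBox_of_mul_unimodular {m n : ℕ} (G : Matrix (Fin m ⊕ Fin n) (Fin m ⊕ Fin n) ℝ)
    (γ : Matrix (Fin m ⊕ Fin n) (Fin m ⊕ Fin n) ℤ) (hγ : |γ.det| = 1) (s : ℝ)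
    (h : MissesBox (G * γ.map (fun x : ℤ => (x : ℝ))) s) : MissesBox G s := by
  have hγdet : IsUnit γ.det := Int.isUnit_iff_abs_eq.2 hγ
  intro z h1 h2
  set ζ := γ⁻¹.mulVec z with hζ
  have hz : γ.mulVec ζ = z := by
    rw [hζ, Matrix.mulVec_mulVec, Matrix.mul_nonsing_inv _ hγdet, Matrix.one_mulVec]
  have hzR : (γ.map (fun x : ℤ => (x : ℝ))).mulVec (fun j => (ζ j : ℝ)) = fun j => (z j : ℝ) := by
    ext j; rw [← hz]; simp [Matrix.mulVec, dotProduct]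
  have hζ0 : ζ = 0 := by
    apply h ζ
    · rw [← Matrix.mulVec_mulVec, hzR]; exact h1
    · rw [← Matrix.mulVec_mulVec, hzR]; exact h2
  rw [← hz, hζ0, Matrix.mulVec_zero]

theorem lin_add {m n : ℕ} (Y W : Fin m → Fin n → ℝ) (p : Fin m → ℤ) (q : Fin n → ℤ) (a : Fin m) :
    lin (Y + W) p q a = lin Y p q a + ∑ b, W a b * q b := by
  simp only [lin, Pi.add_apply, add_mul, Finset.sum_add_distrib]; ring

set_option maxHeartbeats 1000000 in
/-- Around a point whose lattice is not too distorted, a ball of proportional size consists of points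
for which the `c`-improved Dirichlet inequality fails at some later time. -/
theorem exists_ball_avoiding {m n : ℕ} (hm : 0 < m) (hn : 0 < n) (c : ℝ) (hc0 : 0 < c) (hc1 : c < 1)
    (h : ℝ) (hh : 1 ≤ h) :
    ∃ ε > 0, ∀ (Y : Fin m → Fin n → ℝ) (τ : ℝ), 1 ≤ τ → Av Y τ h⁻¹ h⁻¹ →
      ∃ Z : Fin m → Fin n → ℝ, (∀ a b, |Z a b| ≤ 1 / 4) ∧
        ∀ Z' : Fin m → Fin n → ℝ, (∀ a b, |Z' a b - Z a b| ≤ ε) →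
          ∃ τ', τ ≤ τ' ∧ Av (Y + (τ ^ (m + n))⁻¹ • Z') τ' c 1 := by
  have : Nonempty (Fin m ⊕ Fin n) := ⟨Sum.inl ⟨0, hm⟩⟩
  obtain ⟨t, ν, ht2, ht1, hν0, hν8, hνt, hct⟩ := exists_time_and_slack c hc0 hc1 n hn
  have ht0 : 0 < t := by linarith
  have hm' : (1 : ℝ) ≤ m := by exact_mod_cast hm
  have hn' : (1 : ℝ) ≤ n := by exact_mod_cast hn
  set D : ℝ := (m + n : ℝ) with hD
  have hD2 : 2 ≤ D := by linarith
  set η : ℝ := ν / D ^ 2 with hη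
  have hη0 : 0 < η := by positivity
  have hηD : D ^ 2 * η = ν := by rw [hη]; field_simp
  obtain ⟨C, hC, e, hred⟩ := reduced_basis (Fin m ⊕ Fin n)
  obtain ⟨S, hS⟩ := exists_uniform_missesBox hm hn (C * h ^ e) η hη0
  set ε : ℝ := ν / (n * ((S : ℝ) + 1) ^ (m + n)) with hε
  have hε0 : 0 < ε := by positivity
  refine ⟨ε, hε0, fun Y τ hτ hY => ?_⟩
  have hτ0 : 0 < τ := by linarith
  obtain ⟨γ, hγ, hγb⟩ := hred (latG Y τ) h (latG_det Y τ hτ0) hh (hY.latG_short hτ0)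
  have hHdet : |(latG Y τ * γ.map (fun x : ℤ => (x : ℝ))).det| = 1 := by
    rw [Matrix.det_mul, abs_mul, latG_det Y τ hτ0, one_mul,
      ← (show (γ.det : ℝ) = _ from Int.cast_det (R := ℝ) γ), ← Int.cast_abs, hγ, Int.cast_one]
  obtain ⟨E, s, hE, hs2, hsS, hmiss⟩ := hS _ hγb hHdet
  rw [← Matrix.mul_assoc] at hmiss
  have hmiss' := missesBox_of_mul_unimodular _ γ hγ _ hmiss
  have scale : ∀ x, x ≤ D ^ 2 → x * η ≤ ν := fun x hx =>
    (mul_le_mul_of_nonneg_right hx hη0.le).trans hηD.le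
  have hmη : m * η ≤ ν / 2 := by
    have := scale (2 * m) (by rw [hD]; nlinarith)
    linarith
  have hηle : 2 * η ≤ ν := scale 2 (by nlinarith)
  have hnη : n * η ≤ ν := scale n (by rw [hD]; nlinarith)
  have hmnη : m * η * (1 + n) ≤ ν := by
    have := scale (m * (1 + n)) (by rw [hD]; nlinarith)
    linarith
  obtain ⟨Z, hZ, hZb⟩ := exists_small_solution (fun i j => E (Sum.inl i) (Sum.inl j))
    (fun i b => E (Sum.inl i) (Sum.inr b)) η (fun i j => (hE _ _).le) (fun i j => (hE _ _).le)
    (by linarith)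
  refine ⟨Z, fun a b => (hZb a b).trans (by linarith), fun Z' hZ' => ?_⟩
  have hs2' : (2 : ℝ) ≤ s := by exact_mod_cast hs2
  have hs0 : (0 : ℝ) < s := by linarith
  have hst : 1 ≤ s * t := by nlinarith
  refine ⟨τ * (s * t), by nlinarith, fun p q hp hq => ?_⟩
  set x : Fin m → ℝ := fun a => τ ^ n * lin Y p q a with hx
  set y : Fin n → ℝ := fun b => (τ ^ m)⁻¹ * q b with hy
  set w : Fin m → ℝ := fun a => x a + ∑ b, Z a b * y b with hw
  have hyb : ∀ b, |y b| ≤ (s * t) ^ m := by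
    intro b
    have := hq b
    rw [one_mul, mul_pow] at this
    simp only [hy, abs_mul, abs_inv, abs_of_pos (pow_pos hτ0 m)]
    exact (inv_mul_le_iff₀ (pow_pos hτ0 m)).2 this.le
  have hx' : ∀ a, (s * t) ^ n * |x a + ∑ b, Z' a b * y b| < c := by
    intro a
    have h1 := hp a
    have h2 : τ ^ n * lin (Y + (τ ^ (m + n))⁻¹ • Z') p q a = x a + ∑ b, Z' a b * y b := by
      rw [lin_add, mul_add, Finset.mul_sum]
      congr 1
      refine Finset.sum_congr rfl fun b _ => ?_
      simp only [Pi.smul_apply, smul_eq_mul, hy, pow_add]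
      field_simp
    rw [← h2, abs_mul, abs_of_pos (pow_pos hτ0 n), ← mul_assoc, ← mul_pow, mul_comm (s * t)]
    exact h1
  have hsS' : (s : ℝ) ^ (m + n) ≤ ((S : ℝ) + 1) ^ (m + n) := by
    apply pow_le_pow_left₀ (by positivity)
    have : (s : ℝ) ≤ S := by exact_mod_cast hsS
    linarith
  have hstm : (s * t) ^ m ≤ s ^ m * t := by
    rw [mul_pow]
    exact mul_le_mul_of_nonneg_left (pow_le_of_le_one ht0.le ht1.le hm.ne') (by positivity)
  have hstm' : (s * t) ^ m ≤ s ^ m := hstm.trans (mul_le_of_le_one_right (by positivity) ht1.le)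
  have hsm1 : (1 : ℝ) ≤ s ^ m := one_le_pow₀ (by linarith)
  have hsn1 : (1 : ℝ) ≤ s ^ n := one_le_pow₀ (by linarith)
  have hεb : n * ε * (s * t) ^ m * s ^ n ≤ ν := by
    calc n * ε * (s * t) ^ m * s ^ n ≤ n * ε * s ^ m * s ^ n := by gcongr
      _ = n * ε * s ^ (m + n) := by rw [pow_add]; ring
      _ ≤ n * ε * ((S : ℝ) + 1) ^ (m + n) := mul_le_mul_of_nonneg_left hsS' (by positivity)
      _ = ν := by rw [hε]; field_simp
  -- `w` is a small perturbation of the error vector of the displaced matrix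
  have hwb : ∀ a, |w a| * s ^ n ≤ 1 - 2 * ν := by
    intro a
    have h1 : w a = (x a + ∑ b, Z' a b * y b) - ∑ b, (Z' a b - Z a b) * y b := by
      simp only [hw, sub_mul, Finset.sum_sub_distrib]; ring
    have h2 := abs_sum_mul_le (fun b => Z' a b - Z a b) y ε _ hε0.le (hZ' a) hyb
    have h3 : |w a| ≤ |x a + ∑ b, Z' a b * y b| + n * ε * (s * t) ^ m := by
      rw [h1]; exact (abs_sub _ _).trans (by linarith)
    have htn : 0 < t ^ n := pow_pos ht0 n
    have h4 : |x a + ∑ b, Z' a b * y b| * s ^ n ≤ 1 - 4 * ν := by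
      refine le_of_mul_le_mul_right ?_ htn
      have := hx' a
      rw [mul_pow] at this
      linarith
    have h5 := mul_le_mul_of_nonneg_right h3 (by positivity : (0 : ℝ) ≤ s ^ n)
    linarith
  have hw1 : ∀ a, |w a| ≤ (1 - 2 * ν) / s ^ n := fun a =>
    (le_div_iff₀ (by positivity)).2 (hwb a)
  have hxb : ∀ a, |x a| ≤ s ^ m * (1 + n) := by
    intro a
    have h1 : x a = w a - ∑ b, Z a b * y b := by simp only [hw]; ring
    have h2 := abs_sum_mul_le (fun b => Z a b) y (1 / 4) _ (by norm_num)
      (fun b => (hZb a b).trans (by linarith)) hyb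
    have h3 : |w a| ≤ 1 := by
      have := hwb a
      have := le_mul_of_one_le_right (abs_nonneg (w a)) hsn1
      linarith
    have h4 : |x a| ≤ |w a| + n * (1 / 4) * (s * t) ^ m := by
      rw [h1]; exact (abs_sub _ _).trans (by linarith)
    have h5 : n * (1 / 4) * (s * t) ^ m ≤ n * (1 / 4) * s ^ m := by gcongr
    have h6 : 0 ≤ (n : ℝ) * s ^ m := by positivity
    linarith
  have hz := hmiss' (Sum.elim p q) (by
    intro i
    have h1 : (((1 + E) * latG Y τ).mulVec fun j => ((Sum.elim p q j : ℤ) : ℝ)) (Sum.inl i) =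
        w i + ∑ j, E (Sum.inl i) (Sum.inl j) * w j := by
      rw [← Matrix.mulVec_mulVec, Matrix.add_mulVec, Matrix.one_mulVec, Pi.add_apply, latG_inl]
      simp only [Matrix.mulVec.eq_1 E, dotProduct, Fintype.sum_sum_type, latG_inl, latG_inr,
        Sum.elim_inl, Sum.elim_inr]
      change x i + ((∑ j, E (Sum.inl i) (Sum.inl j) * x j) +
        ∑ b, E (Sum.inl i) (Sum.inr b) * y b) = _
      simp only [hw, ← hZ, mul_add, add_mul, Finset.sum_add_distrib, Finset.mul_sum,
        Finset.sum_mul]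
      rw [Finset.sum_comm (f := fun b j => E (Sum.inl i) (Sum.inl j) * Z j b * y b)]
      simp only [mul_assoc]
      ring
    have h2 := abs_sum_mul_le (fun j => E (Sum.inl i) (Sum.inl j)) w η _ hη0.le
      (fun j => (hE _ _).le) hw1
    rw [h1]
    have h3 := abs_add_le (w i) (∑ j, E (Sum.inl i) (Sum.inl j) * w j)
    have h4 : m * η * ((1 - 2 * ν) / s ^ n) * s ^ n = m * η * (1 - 2 * ν) := by field_simp
    have h5 := hwb i
    have h6 := mul_le_mul_of_nonneg_right (h3.trans (add_le_add_right h2 _))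
      (by positivity : (0 : ℝ) ≤ s ^ n)
    rw [add_mul, h4] at h6
    have h7 : m * η * (1 - 2 * ν) ≤ m * η * 1 := by gcongr; linarith
    linarith) (by
    intro i
    have h1 : (((1 + E) * latG Y τ).mulVec fun j => ((Sum.elim p q j : ℤ) : ℝ)) (Sum.inr i) =
        y i + ((∑ j, E (Sum.inr i) (Sum.inl j) * x j) + ∑ b, E (Sum.inr i) (Sum.inr b) * y b) := by
      rw [← Matrix.mulVec_mulVec, Matrix.add_mulVec, Matrix.one_mulVec, Pi.add_apply, latG_inr]
      simp only [Matrix.mulVec.eq_1 E, dotProduct, Fintype.sum_sum_type, latG_inl, latG_inr,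
        Sum.elim_inl, Sum.elim_inr]
      rfl
    have h2 := abs_sum_mul_le (fun j => E (Sum.inr i) (Sum.inl j)) x η _ hη0.le
      (fun j => (hE _ _).le) hxb
    have h3 := abs_sum_mul_le (fun j => E (Sum.inr i) (Sum.inr j)) y η _ hη0.le
      (fun j => (hE _ _).le) (fun b => (hyb b).trans hstm')
    have h4 := (hyb i).trans hstm
    have h5 : m * η * (s ^ m * (1 + n)) ≤ ν * s ^ m := by
      calc m * η * (s ^ m * (1 + n)) = m * η * (1 + n) * s ^ m := by ring
        _ ≤ _ := by gcongr
    have h6 : n * η * s ^ m ≤ ν * s ^ m := by gcongr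
    rw [h1]
    have h7 := abs_add_three (y i) (∑ j, E (Sum.inr i) (Sum.inl j) * x j)
      (∑ b, E (Sum.inr i) (Sum.inr b) * y b)
    rw [add_assoc] at h7
    have h8 : s ^ m * (t + 2 * ν) < s ^ m * 1 := by gcongr; linarith
    linarith)
  exact ⟨funext fun i => congrFun hz (Sum.inl i), funext fun i => congrFun hz (Sum.inr i)⟩

/-! ### Counting grid points in slabs -/

/-- The number of terms of an arithmetic progression in an interval. -/
theorem card_arith_le (F : Finset ℕ) (A B D : ℝ) (hB : B ≠ 0) (hD : 0 ≤ D)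
    (hF : ∀ j ∈ F, |A + B * j| < D) : (F.card : ℝ) ≤ 2 * D / |B| + 1 := by
  rcases F.eq_empty_or_nonempty with rfl | hne
  · have : 0 < |B| := abs_pos.2 hB
    simp only [Finset.card_empty, Nat.cast_zero]; positivity
  · have hB0 : 0 < |B| := abs_pos.2 hB
    set u := F.min' hne
    set v := F.max' hne
    have huv : u ≤ v := F.min'_le _ (F.max'_mem hne)
    have h1 : F.card ≤ v - u + 1 := by
      have : F ⊆ Finset.Icc u v := fun x hx => Finset.mem_Icc.2 ⟨F.min'_le x hx, F.le_max' x hx⟩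
      have := Finset.card_le_card this
      rw [Nat.card_Icc] at this
      omega
    have h2 : (F.card : ℝ) ≤ (v : ℝ) - u + 1 := by
      have : (F.card : ℝ) ≤ ((v - u + 1 : ℕ) : ℝ) := by exact_mod_cast h1
      rw [Nat.cast_add, Nat.cast_sub huv, Nat.cast_one] at this
      exact this
    have h3 : |B| * ((v : ℝ) - u) ≤ 2 * D := by
      have hu := hF u (F.min'_mem hne)
      have hv := hF v (F.max'_mem hne)
      have huv' : (0 : ℝ) ≤ (v : ℝ) - u := sub_nonneg.2 (by exact_mod_cast huv)
      calc |B| * ((v : ℝ) - u) = |(A + B * v) - (A + B * u)| := by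
            rw [show (A + B * v) - (A + B * u) = B * ((v : ℝ) - u) by ring, abs_mul,
              abs_of_nonneg huv']
        _ ≤ |A + B * v| + |A + B * u| := abs_sub _ _
        _ ≤ 2 * D := by linarith
    have h4 : (v : ℝ) - u ≤ 2 * D / |B| := by rw [le_div_iff₀ hB0]; linarith
    linarith

open Classical in
/-- The number of points of the grid `{0, …, k - 1} ^ n` in a slab that is transversal to coordinate `b₀`. -/
theorem card_row_le (n k : ℕ) (b₀ : Fin n) (A : ℝ) (B : Fin n → ℝ) (D : ℝ) (hB : B b₀ ≠ 0)
    (hD : 0 ≤ D) :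
    ((Finset.univ.filter fun f : Fin n → Fin k => |A + ∑ b, B b * (f b : ℕ)| < D).card : ℝ) ≤
      (2 * D / |B b₀| + 1) * (k : ℝ) ^ (n - 1) := by
  obtain ⟨n', rfl⟩ : ∃ n', n = n' + 1 := ⟨n - 1, by have := b₀.2; omega⟩
  rw [Nat.add_sub_cancel]
  have hpos : 0 ≤ 2 * D / |B b₀| + 1 := by positivity
  have h := Finset.card_le_mul_card_image_of_maps_to
    (s := Finset.univ.filter fun f : Fin (n' + 1) → Fin k => |A + ∑ b, B b * (f b : ℕ)| < D)
    (t := (Finset.univ : Finset (Fin n' → Fin k))) (f := fun f i => f (b₀.succAbove i))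
    (fun _ _ => Finset.mem_univ _) ⌊2 * D / |B b₀| + 1⌋₊ (by
      intro g _
      refine Nat.le_floor ?_
      rw [← Finset.card_image_of_injOn (f := fun f : Fin (n' + 1) → Fin k => (f b₀ : ℕ))]
      · refine card_arith_le _ (A + ∑ i, B (b₀.succAbove i) * (g i : ℕ)) (B b₀) D hB hD ?_
        intro j hj
        obtain ⟨f, hf, rfl⟩ := Finset.mem_image.1 hj
        obtain ⟨hf₁, rfl⟩ := Finset.mem_filter.1 hf
        have hf := (Finset.mem_filter.1 hf₁).2
        rw [Fin.sum_univ_succAbove _ b₀] at hf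
        convert hf using 2
        ring
      · intro f hf f' hf' hff
        obtain ⟨-, hg⟩ := Finset.mem_filter.1 hf
        obtain ⟨-, hg'⟩ := Finset.mem_filter.1 hf'
        funext i
        rcases Fin.eq_self_or_eq_succAbove b₀ i with rfl | ⟨i, rfl⟩
        · exact Fin.ext hff
        · exact congrFun (hg.trans hg'.symm) i)
  rw [Finset.card_univ, Fintype.card_fun, Fintype.card_fin, Fintype.card_fin] at h
  calc _ ≤ ((⌊2 * D / |B b₀| + 1⌋₊ * k ^ n' : ℕ) : ℝ) := by exact_mod_cast h
    _ = (⌊2 * D / |B b₀| + 1⌋₊ : ℝ) * (k : ℝ) ^ n' := by push_cast; rfl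
    _ ≤ _ := mul_le_mul_of_nonneg_right (Nat.floor_le hpos) (by positivity)

open Classical in
/-- The number of points of an `m × n` grid for which every row lies in a given slab. -/
theorem card_grid_le (m n k : ℕ) (b₀ : Fin n) (A : Fin m → ℝ) (B : Fin n → ℝ) (D X : ℝ)
    (hB : B b₀ ≠ 0) (hD : 0 ≤ D) (hX : 2 * D / |B b₀| + 1 ≤ X) :
    ((Finset.univ.filter fun f : Fin m → Fin n → Fin k =>
      ∀ a, |A a + ∑ b, B b * (f a b : ℕ)| < D).card : ℝ) ≤ (X * (k : ℝ) ^ (n - 1)) ^ m := by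
  have h : (Finset.univ.filter fun f : Fin m → Fin n → Fin k =>
      ∀ a, |A a + ∑ b, B b * (f a b : ℕ)| < D) = Fintype.piFinset fun a =>
        Finset.univ.filter fun f : Fin n → Fin k => |A a + ∑ b, B b * (f b : ℕ)| < D := by
    ext f; simp [Fintype.mem_piFinset]
  rw [h, Fintype.card_piFinset, Nat.cast_prod]
  calc _ ≤ ∏ _a : Fin m, X * (k : ℝ) ^ (n - 1) := by
        refine Finset.prod_le_prod (fun _ _ => Nat.cast_nonneg _) fun a _ => ?_
        exact (card_row_le n k b₀ (A a) B D hB hD).trans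
          (mul_le_mul_of_nonneg_right hX (by positivity))
    _ = _ := by simp

/-- Dyadic summation: if the counting function of the values `y v` is at most `A ρ ^ d` with `m < d`,
then `∑ (Z / y v) ^ m` is dominated by its largest scale. -/
theorem sum_div_pow_le {α : Type*} (m d : ℕ) (hmd : m < d) (y : α → ℝ) (A : ℝ) (hA : 0 ≤ A) (J : ℕ) :
    ∀ (S : Finset α) (Z : ℝ), 0 < Z → (∀ v ∈ S, 0 < y v) → (∀ v ∈ S, y v < Z) →
      (∀ v ∈ S, Z / 2 ^ J ≤ y v) →
      (∀ ρ > 0, ((S.filter fun v => y v < ρ).card : ℝ) ≤ A * ρ ^ d) →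
      ∑ v ∈ S, (Z / y v) ^ m ≤ 2 ^ (m + 1) * A * Z ^ d := by
  induction J with
  | zero =>
    intro S Z hZ _ h1 h2 _
    have : S = ∅ := by
      refine Finset.eq_empty_of_forall_notMem fun v hv => ?_
      have := h1 v hv
      have := h2 v hv
      rw [pow_zero, div_one] at this
      linarith
    rw [this, Finset.sum_empty]; positivity
  | succ J ih =>
    intro S Z hZ h0 h1 h2 hcard
    rw [← Finset.sum_filter_add_sum_filter_not S (fun v => y v < Z / 2)]
    have hlow := ih (S.filter fun v => y v < Z / 2) (Z / 2) (by positivity)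
      (fun v hv => h0 v (Finset.mem_filter.1 hv).1) (fun v hv => (Finset.mem_filter.1 hv).2)
      (fun v hv => by
        have := h2 v (Finset.mem_filter.1 hv).1
        rw [pow_succ] at this
        rw [div_div, mul_comm]; exact this)
      (fun ρ hρ => by
        refine le_trans ?_ (hcard ρ hρ)
        exact_mod_cast Finset.card_le_card
          (Finset.filter_subset_filter _ (Finset.filter_subset _ _)))
    have hlow' : ∑ v ∈ S with y v < Z / 2, (Z / y v) ^ m ≤ 2 ^ m * A * Z ^ d := by
      have h3 : ∑ v ∈ S with y v < Z / 2, (Z / y v) ^ m =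
          2 ^ m * ∑ v ∈ S with y v < Z / 2, (Z / 2 / y v) ^ m := by
        rw [Finset.mul_sum]
        refine Finset.sum_congr rfl fun v _ => ?_
        rw [← mul_pow]; congr 1; ring
      rw [h3]
      calc _ ≤ 2 ^ m * (2 ^ (m + 1) * A * (Z / 2) ^ d) := by gcongr
        _ = 2 ^ m * A * Z ^ d * (2 ^ (m + 1) / 2 ^ d) := by rw [div_pow]; ring
        _ ≤ 2 ^ m * A * Z ^ d * 1 := by
            gcongr
            rw [div_le_one (by positivity)]
            exact pow_le_pow_right₀ (by norm_num) hmd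
        _ = _ := mul_one _
    have hhigh : ∑ v ∈ S with ¬ y v < Z / 2, (Z / y v) ^ m ≤ 2 ^ m * A * Z ^ d := by
      calc ∑ v ∈ S with ¬ y v < Z / 2, (Z / y v) ^ m ≤ ∑ v ∈ S with ¬ y v < Z / 2, (2 : ℝ) ^ m := by
            refine Finset.sum_le_sum fun v hv => ?_
            obtain ⟨hv, hv2⟩ := Finset.mem_filter.1 hv
            have hy := h0 v hv
            apply pow_le_pow_left₀ (by positivity)
            rw [div_le_iff₀ hy]; linarith
        _ = ((S.filter fun v => ¬ y v < Z / 2).card : ℝ) * 2 ^ m := by simp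
        _ ≤ (A * Z ^ d) * 2 ^ m := by
            gcongr
            refine le_trans ?_ (hcard Z hZ)
            norm_cast
            apply Finset.card_le_card
            intro v hv
            obtain ⟨hv, -⟩ := Finset.mem_filter.1 hv
            exact Finset.mem_filter.2 ⟨hv, h1 v hv⟩
        _ = _ := by ring
    calc _ ≤ 2 ^ m * A * Z ^ d + 2 ^ m * A * Z ^ d := add_le_add hlow' hhigh
      _ = _ := by rw [pow_succ]; ring

/-! ### Subdivision and distorted children -/

/-- The centres of the `k ^ (m n)` cubes obtained by cutting every side of the cube with centre `Y` and
side length `r` into `k` equal parts. -/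
noncomputable def child {m n : ℕ} (Y : Fin m → Fin n → ℝ) (r : ℝ) (k : ℕ)
    (i : Fin m → Fin n → Fin k) : Fin m → Fin n → ℝ :=
  Y + fun a b => r * ((2 * ((i a b : ℕ) : ℝ) + 1 - k) / (2 * k))

theorem child_offset_le {k : ℕ} (j : Fin k) : |(2 * ((j : ℕ) : ℝ) + 1 - k) / (2 * k)| ≤ 1 / 2 := by
  have h1 : ((j : ℕ) : ℝ) + 1 ≤ k := by exact_mod_cast j.2
  have h2 : (0 : ℝ) ≤ (j : ℕ) := Nat.cast_nonneg _
  have hk : (0 : ℝ) < k := by linarith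
  rw [abs_div, abs_of_pos (by positivity : (0 : ℝ) < 2 * k), div_le_iff₀ (by positivity), abs_le]
  constructor <;> linarith

/-- The size of the `ℤⁿ`-component of an integer vector at time `τ`. -/
noncomputable def botSize {m n : ℕ} (τ : ℝ) (z : Fin m ⊕ Fin n → ℤ) : ℝ :=
  ‖fun b => (z (Sum.inr b) : ℝ)‖ / τ ^ m

/-- If a child of a point is distorted at time `κ τ`, the responsible integer vector is bounded above and
below at time `τ`, and for the parent its first `m` coordinates are dominated by the last `n`. -/
theorem bad_child_witness {m n : ℕ} (hn : 0 < n) (Y : Fin m → Fin n → ℝ)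
    (τ a : ℝ) (hτ : 1 ≤ τ) (ha : 1 ≤ a) (hY : Av Y τ a⁻¹ a⁻¹) (κ : ℕ) (hκ : 2 * a ≤ κ) (σ : ℝ)
    (hσ0 : 0 < σ) (hσ1 : σ ≤ 1) (i : Fin m → Fin n → Fin (κ ^ (m + n)))
    (hi : ¬ Av (child Y (τ ^ (m + n))⁻¹ (κ ^ (m + n)) i) (κ * τ) σ σ) :
    ∃ z : Fin m ⊕ Fin n → ℤ,
      (∀ a, (κ * τ) ^ n * |lin (child Y (τ ^ (m + n))⁻¹ (κ ^ (m + n)) i)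
        (fun i => z (Sum.inl i)) (fun b => z (Sum.inr b)) a| < σ) ∧
      botSize τ z < σ * κ ^ m ∧ 1 / (2 * n * a) ≤ botSize τ z ∧
      ∀ j, |((latG Y τ).mulVec fun j => (z j : ℝ)) j| ≤ 2 * n * botSize τ z := by
  have hτ0 : 0 < τ := by linarith
  have ha0 : 0 < a := by linarith
  have hn' : (1 : ℝ) ≤ n := by exact_mod_cast hn
  have hκ0 : (0 : ℝ) < κ := by linarith
  have : Nonempty (Fin n) := ⟨⟨0, hn⟩⟩
  unfold Av at hi
  push Not at hi
  obtain ⟨p, q, hp, hq, hpq⟩ := hi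
  set z : Fin m ⊕ Fin n → ℤ := Sum.elim p q with hz
  have hz0 : z ≠ 0 := by
    intro h
    exact hpq (funext fun i => congrFun h (Sum.inl i)) (funext fun i => congrFun h (Sum.inr i))
  set y := botSize τ z with hy
  have hqy : ∀ b, |(q b : ℝ)| ≤ y * τ ^ m := by
    intro b
    have := norm_le_pi_norm (fun b => (z (Sum.inr b) : ℝ)) b
    rw [hy, botSize, div_mul_cancel₀ _ (by positivity)]
    exact this
  have hy0 : 0 ≤ y := div_nonneg (norm_nonneg _) (by positivity)
  have htop : ∀ i, |((latG Y τ).mulVec fun j => (z j : ℝ)) (Sum.inl i)| ≤ 1 / (2 * a) + n * y / 2 := by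
    intro c
    rw [latG_inl]
    have h1 := hp c
    change _ * |lin (Y + _) p q c| < σ at h1
    rw [lin_add] at h1
    set W := ∑ b, (τ ^ (m + n))⁻¹ * ((2 * ((i c b : ℕ) : ℝ) + 1 - (κ ^ (m + n) : ℕ)) /
      (2 * (κ ^ (m + n) : ℕ))) * (q b : ℝ) with hW
    have h2 : |W| ≤ n * ((τ ^ (m + n))⁻¹ * (1 / 2)) * (y * τ ^ m) := by
      rw [hW]
      refine abs_sum_mul_le _ _ _ _ (by positivity) (fun b => ?_) hqy
      rw [abs_mul, abs_of_pos (by positivity : (0 : ℝ) < (τ ^ (m + n))⁻¹)]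
      exact mul_le_mul_of_nonneg_left (child_offset_le _) (by positivity)
    have h3 : τ ^ n * |W| ≤ n * y / 2 := by
      calc τ ^ n * |W| ≤ τ ^ n * (n * ((τ ^ (m + n))⁻¹ * (1 / 2)) * (y * τ ^ m)) := by gcongr
        _ = n * y / 2 := by rw [pow_add]; field_simp
    have h4 : τ ^ n * |lin Y p q c + W| ≤ 1 / (2 * a) := by
      rw [mul_pow, mul_assoc] at h1
      have h5 : 2 * a ≤ (κ : ℝ) ^ n := hκ.trans (le_self_pow₀ (by linarith) hn.ne')
      rw [le_div_iff₀ (by positivity)]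
      have h6 : 0 ≤ τ ^ n * |lin Y p q c + W| := by positivity
      nlinarith
    change |τ ^ n * lin Y p q c| ≤ _
    rw [abs_mul, abs_of_pos (pow_pos hτ0 n)]
    have h7 : |lin Y p q c| ≤ |lin Y p q c + W| + |W| := by
      have := abs_sub (lin Y p q c + W) W
      rwa [add_sub_cancel_right] at this
    have h8 := mul_le_mul_of_nonneg_left h7 (pow_pos hτ0 n).le
    linarith
  have hbot : ∀ b, |((latG Y τ).mulVec fun j => (z j : ℝ)) (Sum.inr b)| ≤ y := by
    intro b
    rw [latG_inr, abs_mul, abs_of_pos (by positivity : 0 < (τ ^ m)⁻¹),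
      inv_mul_le_iff₀ (by positivity), mul_comm]
    exact hqy b
  have hylow : 1 / (2 * n * a) ≤ y := by
    by_contra hcon
    push Not at hcon
    rw [lt_div_iff₀ (by positivity)] at hcon
    obtain ⟨j, hj⟩ := hY.latG_short hτ0 z hz0
    have h1 : 1 ≤ |((latG Y τ).mulVec fun j => (z j : ℝ)) j| * a := by
      rwa [inv_eq_one_div, div_le_iff₀ ha0] at hj
    rcases j with c | b
    · have h2 := htop c
      have h3 := mul_le_mul_of_nonneg_right h2 ha0.le
      have h4 : (1 / (2 * a) + n * y / 2) * a = 1 / 2 + n * y * a / 2 := by field_simp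
      rw [h4] at h3
      linarith
    · have h2 := mul_le_mul_of_nonneg_right (hbot b) ha0.le
      have h3 : 0 ≤ y * a := by positivity
      nlinarith
  refine ⟨z, hp, ?_, hylow, ?_⟩
  · rw [botSize, div_lt_iff₀ (by positivity), pi_norm_lt_iff (by positivity)]
    intro b
    have := hq b
    rw [mul_pow, ← mul_assoc] at this
    exact this
  · rw [div_le_iff₀ (by positivity)] at hylow
    have h1 : 1 / (2 * a) ≤ n * y := by
      rw [div_le_iff₀ (by positivity)]; linarith
    rintro (c | b)
    · have h0 : 0 ≤ n * y := by positivity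
      exact (htop c).trans (by linarith)
    · exact (hbot b).trans (by nlinarith)

open Classical in
/-- The number of children that a given integer vector `z` makes distorted: each row of the child lies
in a slab normal to the `ℤⁿ`-component of `z`. -/
theorem card_children_le {m n : ℕ} (hn : 0 < n) (Y : Fin m → Fin n → ℝ)
    (τ : ℝ) (hτ : 1 ≤ τ) (κ : ℕ) (hκ : 0 < κ) (σ : ℝ) (hσ : 0 < σ) (z : Fin m ⊕ Fin n → ℤ)
    (hz0 : 0 < botSize τ z) (hz : botSize τ z < σ * κ ^ m) :
    ((Finset.univ.filter fun i : Fin m → Fin n → Fin (κ ^ (m + n)) =>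
      ∀ a, (κ * τ) ^ n * |lin (child Y (τ ^ (m + n))⁻¹ (κ ^ (m + n)) i)
        (fun i => z (Sum.inl i)) (fun b => z (Sum.inr b)) a| < σ).card : ℝ) ≤
      (3 * (σ * κ ^ m / botSize τ z) * ((κ ^ (m + n) : ℕ) : ℝ) ^ (n - 1)) ^ m := by
  have hτ0 : 0 < τ := by linarith
  have hκ0 : (0 : ℝ) < κ := by exact_mod_cast hκ
  have : Nonempty (Fin n) := ⟨⟨0, hn⟩⟩
  set q : Fin n → ℤ := fun b => z (Sum.inr b)
  set k := κ ^ (m + n) with hk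
  have hk0 : (0 : ℝ) < k := by rw [hk]; positivity
  obtain ⟨b₀, -, hb₀⟩ := Finset.exists_max_image Finset.univ (fun b => |(q b : ℝ)|)
    Finset.univ_nonempty
  set y := botSize τ z with hy
  have hqb : |(q b₀ : ℝ)| = y * τ ^ m := by
    rw [hy, botSize, div_mul_cancel₀ _ (by positivity)]
    apply le_antisymm
    · exact norm_le_pi_norm (fun b => (z (Sum.inr b) : ℝ)) b₀
    · exact (pi_norm_le_iff_of_nonneg (abs_nonneg _)).2 fun b => hb₀ b (Finset.mem_univ _)
  have hq0 : (q b₀ : ℝ) ≠ 0 := by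
    rw [← abs_pos, hqb]; positivity
  have h := card_grid_le m n k b₀
    (fun a => lin Y (fun i => z (Sum.inl i)) q a +
      ∑ b, ((τ ^ (m + n))⁻¹ * ((1 - k) / (2 * k))) * q b)
    (fun b => (τ ^ (m + n))⁻¹ * q b / k) (σ / (κ * τ) ^ n) (3 * (σ * κ ^ m / y))
    (by positivity) (by positivity) (by
      have h1 : 2 * (σ / (κ * τ) ^ n) / |(τ ^ (m + n))⁻¹ * q b₀ / k| = 2 * (σ * κ ^ m / y) := by
        rw [abs_div, abs_mul, hqb, abs_of_pos hk0,
          abs_of_pos (by positivity : (0 : ℝ) < (τ ^ (m + n))⁻¹), hk]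
        push_cast
        rw [pow_add, pow_add, mul_pow]
        field_simp
      rw [h1]
      have h2 : 1 ≤ σ * κ ^ m / y := by rw [le_div_iff₀ hz0]; linarith
      linarith)
  refine le_trans (le_of_eq ?_) h
  congr 2
  ext i
  simp only [Finset.mem_filter, Finset.mem_univ, true_and]
  refine forall_congr' fun a => ?_
  rw [lt_div_iff₀ (by positivity), mul_comm, child, lin_add, add_assoc, ← Finset.sum_add_distrib]
  have : ∀ b, (τ ^ (m + n))⁻¹ * ((2 * ((i a b : ℕ) : ℝ) + 1 - k) / (2 * k)) * (q b : ℝ) =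
      (τ ^ (m + n))⁻¹ * ((1 - k) / (2 * k)) * q b + (τ ^ (m + n))⁻¹ * q b / k * (i a b : ℕ) := by
    intro b; field_simp; ring
  simp only [this]

/-! ### Tail bound for the distortion of children -/

open Classical in
/-- Provided that `κ` is large compared to the distortion `a` of a point, at most a proportion `O(1/u)`
of its children have distortion more than `u`. -/
theorem tail_bound {m n : ℕ} (hm : 0 < m) (hn : 0 < n) :
    ∃ C₂ : ℝ, 1 ≤ C₂ ∧ ∃ e₂ : ℕ, ∃ C : ℝ, 1 ≤ C ∧ ∀ (Y : Fin m → Fin n → ℝ) (τ a : ℝ) (κ : ℕ) (u : ℝ),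
      1 ≤ τ → 1 ≤ a → Av Y τ a⁻¹ a⁻¹ → C₂ * a ^ e₂ ≤ κ → 1 ≤ u →
      ((Finset.univ.filter fun i : Fin m → Fin n → Fin (κ ^ (m + n)) =>
        ¬ Av (child Y (τ ^ (m + n))⁻¹ (κ ^ (m + n)) i) (κ * τ) u⁻¹ u⁻¹).card : ℝ) ≤
        C * ((κ ^ (m + n) : ℕ) : ℝ) ^ (m * n) / u := by
  have : Nonempty (Fin m ⊕ Fin n) := ⟨Sum.inl ⟨0, hm⟩⟩
  obtain ⟨C₀, hC₀, e₀, hcount⟩ := card_lattice_le (Fin m ⊕ Fin n)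
  have hm' : (1 : ℝ) ≤ m := by exact_mod_cast hm
  have hn' : (1 : ℝ) ≤ n := by exact_mod_cast hn
  set d := m + n with hd
  set A : ℝ := C₀ * (4 * n) ^ d with hA
  have hA1 : 1 ≤ A := one_le_mul_of_one_le_of_one_le hC₀ (one_le_pow₀ (by linarith))
  refine ⟨(2 * n) ^ m, one_le_pow₀ (by linarith), e₀ * d + m, 3 ^ m * (2 ^ (m + 1) + 1) * A, ?_, ?_⟩
  · refine one_le_mul_of_one_le_of_one_le (one_le_mul_of_one_le_of_one_le
      (one_le_pow₀ (by norm_num)) ?_) hA1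
    have : (0 : ℝ) < 2 ^ (m + 1) := by positivity
    linarith
  intro Y τ a κ u hτ ha hY hκ hu
  have hτ0 : 0 < τ := by linarith
  have ha0 : 0 < a := by linarith
  have hκ2 : 2 * a ≤ κ := by
    refine le_trans ?_ hκ
    have h1 : (2 : ℝ) ≤ (2 * n) ^ m :=
      (show (2 : ℝ) ≤ 2 * n by linarith).trans (le_self_pow₀ (by linarith) hm.ne')
    have h2 : a ≤ a ^ (e₀ * d + m) := le_self_pow₀ ha (by omega)
    exact mul_le_mul h1 h2 ha0.le (by linarith)
  have hκ0' : (0 : ℝ) < κ := by linarith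
  have hκ1 : (1 : ℝ) ≤ κ := by linarith
  have hκ0 : 0 < κ := by exact_mod_cast hκ0'
  set σ := u⁻¹ with hσ
  have hσ0 : 0 < σ := by positivity
  have hσ1 : σ ≤ 1 := inv_le_one_of_one_le₀ hu
  set k := κ ^ d with hk
  have hkR : (k : ℝ) = (κ : ℝ) ^ d := by rw [hk]; push_cast; rfl
  set bad := Finset.univ.filter fun i : Fin m → Fin n → Fin k =>
        ¬ Av (child Y (τ ^ d)⁻¹ k i) (κ * τ) σ σ with hbad
  have hwit := fun (i : Fin m → Fin n → Fin k) (hi : ¬ Av (child Y (τ ^ d)⁻¹ k i) (κ * τ) σ σ) =>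
    bad_child_witness hn Y τ a hτ ha hY κ hκ2 σ hσ0 hσ1 i hi
  choose! w hw1 hw2 hw3 hw4 using hwit
  set F := bad.image w with hF
  set Z : ℝ := σ * κ ^ m with hZ
  have hZ0 : 0 < Z := by positivity
  set y : (Fin m ⊕ Fin n → ℤ) → ℝ := botSize τ with hy
  have hF1 : ∀ z ∈ F, y z < Z := by
    intro z hz
    obtain ⟨i, hi, rfl⟩ := Finset.mem_image.1 hz
    exact hw2 i (Finset.mem_filter.1 hi).2
  have hF2 : ∀ z ∈ F, 1 / (2 * n * a) ≤ y z := by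
    intro z hz
    obtain ⟨i, hi, rfl⟩ := Finset.mem_image.1 hz
    exact hw3 i (Finset.mem_filter.1 hi).2
  have hF3 : ∀ z ∈ F, ∀ j, |((latG Y τ).mulVec fun j => (z j : ℝ)) j| ≤ 2 * n * y z := by
    intro z hz
    obtain ⟨i, hi, rfl⟩ := Finset.mem_image.1 hz
    exact hw4 i (Finset.mem_filter.1 hi).2
  have hF0 : ∀ z ∈ F, 0 < y z := fun z hz => lt_of_lt_of_le (by positivity) (hF2 z hz)
  have hcard : (bad.card : ℝ) ≤ 3 ^ m * ((k : ℝ) ^ (n - 1)) ^ m * ∑ z ∈ F, (Z / y z) ^ m := by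
    rw [Finset.card_eq_sum_card_image w bad, Nat.cast_sum, Finset.mul_sum]
    refine Finset.sum_le_sum fun z hz => ?_
    have h1 := card_children_le hn Y τ hτ κ hκ0 σ hσ0 z (hF0 z hz) (hF1 z hz)

    refine le_trans ?_ (h1.trans (le_of_eq (by
      rw [mul_pow, mul_pow]
      change 3 ^ m * (Z / y z) ^ m * ((k : ℝ) ^ (n - 1)) ^ m = _
      ring)))
    refine Nat.cast_le.2 ?_
    apply Finset.card_le_card
    intro i hi
    obtain ⟨hib, rfl⟩ := Finset.mem_filter.1 hi
    exact Finset.mem_filter.2 ⟨Finset.mem_univ _, hw1 i (Finset.mem_filter.1 hib).2⟩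
  set ρ₁ : ℝ := a ^ e₀ with hρ₁
  have hρ₁1 : 1 ≤ ρ₁ := one_le_pow₀ ha
  have hcount' : ∀ F' ⊆ F, ∀ ρ, ρ₁ ≤ ρ → (∀ z ∈ F', y z ≤ ρ) → (F'.card : ℝ) ≤ A * ρ ^ d := by
    intro F' hF' ρ hρ hF'ρ
    have h1 := hcount (latG Y τ) a (latG_det Y τ hτ0) ha (hY.latG_short hτ0) (2 * n * ρ) F'
      (by have : 0 ≤ ρ := by linarith
          positivity) (fun z hz j => (hF3 z (hF' hz) j).trans (by
            have := hF'ρ z hz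
            gcongr))
    rw [Fintype.card_sum, Fintype.card_fin, Fintype.card_fin] at h1
    refine h1.trans ?_
    rw [show A * ρ ^ d = C₀ * (4 * n * ρ) ^ d by rw [hA, mul_pow (4 * (n : ℝ)) ρ d, mul_assoc]]
    have h2 : 2 * n * ρ + a ^ e₀ ≤ 4 * n * ρ := by
      have h3 : ρ ≤ n * ρ := le_mul_of_one_le_left (by linarith) hn'
      linarith
    have : 0 ≤ ρ := by linarith
    gcongr
  have hσκ : ∀ j, 0 < j → σ ^ j ≤ σ := fun j hj => pow_le_of_le_one hσ0.le hσ1 hj.ne'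
  have hhigh : ∑ z ∈ F with ¬ y z < ρ₁, (Z / y z) ^ m ≤ 2 ^ (m + 1) * A * (σ * κ ^ (m * d)) := by
    obtain ⟨J, hJ⟩ := pow_unbounded_of_one_lt (Z / ρ₁) (one_lt_two : (1 : ℝ) < 2)
    have h1 := sum_div_pow_le m d (by omega) y A (by linarith) J (F.filter fun z => ¬ y z < ρ₁) Z hZ0
      (fun z hz => hF0 z (Finset.mem_filter.1 hz).1) (fun z hz => hF1 z (Finset.mem_filter.1 hz).1)
      (fun z hz => by
        have h2 := not_lt.1 (Finset.mem_filter.1 hz).2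
        refine le_trans ?_ h2
        rw [div_le_iff₀ (by positivity)]
        rw [div_lt_iff₀ (by linarith)] at hJ
        linarith)
      (fun ρ hρ => by
        rcases le_total ρ₁ ρ with h | h
        · exact hcount' _ ((Finset.filter_subset _ _).trans (Finset.filter_subset _ _)) ρ h
            fun z hz => (Finset.mem_filter.1 hz).2.le
        · rw [Finset.filter_eq_empty_iff.2]
          · simp only [Finset.card_empty, Nat.cast_zero]; positivity
          · intro z hz h3
            exact (Finset.mem_filter.1 hz).2 (h3.trans_le h))
    refine h1.trans ?_
    have h2 : Z ^ d ≤ σ * κ ^ (m * d) := by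
      rw [hZ, mul_pow, ← pow_mul]
      exact mul_le_mul_of_nonneg_right (hσκ d (by omega)) (by positivity)
    gcongr
  have hlow : ∑ z ∈ F with y z < ρ₁, (Z / y z) ^ m ≤ A * (σ * κ ^ (m * d)) := by
    have h1 : ∀ z ∈ F.filter fun z => y z < ρ₁, (Z / y z) ^ m ≤ (2 * n * a) ^ m * (σ * κ ^ (m * m)) := by
      intro z hz
      obtain ⟨hz, -⟩ := Finset.mem_filter.1 hz
      have h2 : Z / y z ≤ (2 * n * a) * Z := by
        have h3 := hF2 z hz
        rw [div_le_iff₀ (by positivity)] at h3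
        rw [div_le_iff₀ (hF0 z hz)]
        nlinarith
      have h4 : Z ^ m ≤ σ * κ ^ (m * m) := by
        rw [hZ, mul_pow, ← pow_mul]
        exact mul_le_mul_of_nonneg_right (hσκ m hm) (by positivity)
      calc (Z / y z) ^ m ≤ ((2 * n * a) * Z) ^ m :=
            pow_le_pow_left₀ (div_nonneg hZ0.le (hF0 z hz).le) h2 m
        _ = (2 * n * a) ^ m * Z ^ m := mul_pow _ _ _
        _ ≤ _ := by gcongr
    have h2 := Finset.sum_le_card_nsmul _ _ _ h1
    rw [nsmul_eq_mul] at h2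
    refine h2.trans ?_
    have h3 := hcount' (F.filter fun z => y z < ρ₁) (Finset.filter_subset _ _) ρ₁ le_rfl
      (fun z hz => (Finset.mem_filter.1 hz).2.le)
    have h4 : ρ₁ ^ d * (2 * n * a) ^ m ≤ (κ : ℝ) ^ (m * n) := by
      calc ρ₁ ^ d * (2 * n * a) ^ m = (2 * n) ^ m * a ^ (e₀ * d + m) := by
            rw [hρ₁, mul_pow, pow_add a, pow_mul a]; ring
        _ ≤ κ := hκ
        _ ≤ _ := le_self_pow₀ hκ1 (by positivity)
    calc _ ≤ A * ρ₁ ^ d * ((2 * n * a) ^ m * (σ * κ ^ (m * m))) := by gcongr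
      _ = A * (σ * κ ^ (m * m)) * (ρ₁ ^ d * (2 * n * a) ^ m) := by ring
      _ ≤ A * (σ * κ ^ (m * m)) * (κ : ℝ) ^ (m * n) := by gcongr
      _ = _ := by rw [hd, mul_add, pow_add]; ring
  refine hcard.trans ?_
  rw [← Finset.sum_filter_add_sum_filter_not F (fun z => y z < ρ₁)]
  calc _ ≤ 3 ^ m * ((k : ℝ) ^ (n - 1)) ^ m *
        (A * (σ * κ ^ (m * d)) + 2 ^ (m + 1) * A * (σ * κ ^ (m * d))) := by gcongr
    _ = 3 ^ m * (2 ^ (m + 1) + 1) * A * (((k : ℝ) ^ (n - 1)) ^ m * (κ : ℝ) ^ (m * d)) * σ := by ring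
    _ = _ := by
      have h1 : ((k : ℝ) ^ (n - 1)) ^ m * (κ : ℝ) ^ (m * d) = (k : ℝ) ^ (m * n) := by
        rw [mul_comm m d, pow_mul (κ : ℝ) d m, ← hkR, ← mul_pow, ← pow_succ, Nat.sub_add_cancel hn,
          ← pow_mul, mul_comm n m]
      rw [h1, hσ, div_eq_mul_inv]

/-! ### Hausdorff measure by repeated subdivision -/

/-- Iterating a subdivision rule `k` times. -/
theorem subdivide_iterate {X T : Type} (E : Set X) (V : T → Prop) (B : T → Set X) (w rad : T → ℝ)
    (step : ∀ t, V t → ∃ (ι : Type) (_ : Fintype ι) (f : ι → T), (∀ i, V (f i)) ∧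
      E ∩ B t ⊆ ⋃ i, B (f i) ∧ ∑ i, w (f i) ≤ w t ∧ ∀ i, rad (f i) ≤ rad t / 2) (k : ℕ) :
    ∀ t, V t → ∃ (ι : Type) (_ : Fintype ι) (f : ι → T), (∀ i, V (f i)) ∧
      E ∩ B t ⊆ ⋃ i, B (f i) ∧ ∑ i, w (f i) ≤ w t ∧ ∀ i, rad (f i) ≤ rad t / 2 ^ k := by
  induction k with
  | zero =>
    intro t ht
    exact ⟨Unit, inferInstance, fun _ => t, fun _ => ht, fun x hx => Set.mem_iUnion.2 ⟨(), hx.2⟩,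
      by simp, by simp⟩
  | succ k ih =>
    intro t ht
    obtain ⟨ι, _, f, hV, hc, hw, hr⟩ := step t ht
    choose ι' hι' f' hV' hc' hw' hr' using fun i => ih (f i) (hV i)
    refine ⟨Σ i, ι' i, inferInstance, fun x => f' x.1 x.2, fun x => hV' _ _, fun x hx => ?_, ?_,
      fun x => ?_⟩
    · obtain ⟨i, hi⟩ := Set.mem_iUnion.1 (hc hx)
      obtain ⟨j, hj⟩ := Set.mem_iUnion.1 (hc' i ⟨hx.1, hi⟩)
      exact Set.mem_iUnion.2 ⟨⟨i, j⟩, hj⟩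
    · rw [Fintype.sum_sigma]
      exact (Finset.sum_le_sum fun i _ => hw' i).trans hw
    · refine (hr' x.1 x.2).trans ?_
      rw [pow_succ', ← div_div]
      gcongr
      exact hr x.1

/-- A set covered by repeated subdivision, where the total weight does not increase and the weight of
a tile dominates the `s`-th power of its diameter, has finite `s`-dimensional measure. -/
theorem hausdorffMeasure_le_of_subdivide {X T : Type} [EMetricSpace X] [MeasurableSpace X] [BorelSpace X]
    (s : ℝ) (E : Set X) (V : T → Prop) (B : T → Set X) (w rad : T → ℝ)
    (hw0 : ∀ t, V t → 0 ≤ w t) (hw : ∀ t, V t → Metric.ediam (B t) ^ s ≤ ENNReal.ofReal (w t))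
    (hrad : ∀ t, V t → Metric.ediam (B t) ≤ ENNReal.ofReal (rad t))
    (step : ∀ t, V t → ∃ (ι : Type) (_ : Fintype ι) (f : ι → T), (∀ i, V (f i)) ∧
      E ∩ B t ⊆ ⋃ i, B (f i) ∧ ∑ i, w (f i) ≤ w t ∧ ∀ i, rad (f i) ≤ rad t / 2) (t : T) (ht : V t) :
    MeasureTheory.Measure.hausdorffMeasure s (E ∩ B t) ≤ ENNReal.ofReal (w t) := by
  choose ι hι f hV hc hs hr using fun k => subdivide_iterate E V B w rad step k t ht
  have h1 : Filter.Tendsto (fun k : ℕ => ENNReal.ofReal (rad t / 2 ^ k)) Filter.atTop (nhds 0) := by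
    rw [← ENNReal.ofReal_zero]
    apply ENNReal.tendsto_ofReal
    exact tendsto_const_nhds.div_atTop (tendsto_pow_atTop_atTop_of_one_lt one_lt_two)
  refine (MeasureTheory.Measure.hausdorffMeasure_le_liminf_sum s (E ∩ B t) _ h1
    (fun k i => B (f k i)) (Filter.Eventually.of_forall fun k i => (hrad _ (hV k i)).trans
      (ENNReal.ofReal_le_ofReal (hr k i))) (Filter.Eventually.of_forall hc)).trans ?_
  refine Filter.liminf_le_of_le (by isBoundedDefault) fun b hb => ?_
  obtain ⟨k, hk⟩ := hb.exists
  refine hk.trans ?_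
  calc _ ≤ ∑ i, ENNReal.ofReal (w (f k i)) := Finset.sum_le_sum fun i _ => hw _ (hV k i)
    _ = ENNReal.ofReal (∑ i, w (f k i)) :=
        (ENNReal.ofReal_sum_of_nonneg fun i _ => hw0 _ (hV k i)).symm
    _ ≤ _ := ENNReal.ofReal_le_ofReal (hs k)

/-! ### Geometry of the subdivision -/

theorem Av.mono {m n : ℕ} {Y : Fin m → Fin n → ℝ} {τ α β α' β' : ℝ} (h : Av Y τ α β) (hτ : 0 ≤ τ)
    (hα : α' ≤ α) (hβ : β' ≤ β) : Av Y τ α' β' := fun p q hp hq =>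
  h p q (fun a => (hp a).trans_le hα) fun b => (hq b).trans_le (by gcongr)

/-- Passing to a child increases the distortion by at most a constant factor. -/
theorem Av.child {m n : ℕ} {Y : Fin m → Fin n → ℝ} {τ a : ℝ} (h : Av Y τ a⁻¹ a⁻¹) (hτ : 1 ≤ τ)
    (ha : 1 ≤ a) (κ : ℕ) (hκ : 1 ≤ κ) (i : Fin m → Fin n → Fin (κ ^ (m + n))) :
    Av (child Y (τ ^ (m + n))⁻¹ (κ ^ (m + n)) i) (κ * τ) ((n + 1) * κ ^ m * a)⁻¹
      ((n + 1) * κ ^ m * a)⁻¹ := by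
  have hτ0 : 0 < τ := by linarith
  have ha0 : 0 < a := by linarith
  have hκ1 : (1 : ℝ) ≤ κ := by exact_mod_cast hκ
  have hκ0 : (0 : ℝ) < κ := by linarith
  have hn0 : (0 : ℝ) ≤ n := Nat.cast_nonneg n
  have hn1 : (0 : ℝ) < n + 1 := by linarith
  intro p q hp hq
  set y : ℝ := ((n + 1) * a)⁻¹ with hy
  have hy0 : 0 < y := by positivity
  have hq' : ∀ b, |(q b : ℝ)| ≤ y * τ ^ m := fun b => by
    refine (hq b).le.trans (le_of_eq ?_)
    rw [hy, mul_pow]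
    field_simp
  have hay : (n + 1) * y = a⁻¹ := by rw [hy]; field_simp
  refine h p q (fun c => ?_) fun b => (hq b).trans_le ?_
  · have h1 := hp c
    change _ * |lin (Y + _) p q c| < _ at h1
    rw [lin_add] at h1
    set W := ∑ b, (τ ^ (m + n))⁻¹ * ((2 * ((i c b : ℕ) : ℝ) + 1 - (κ ^ (m + n) : ℕ)) /
      (2 * (κ ^ (m + n) : ℕ))) * (q b : ℝ) with hW
    have h2 : |W| ≤ n * ((τ ^ (m + n))⁻¹ * (1 / 2)) * (y * τ ^ m) := by
      rw [hW]
      refine abs_sum_mul_le _ _ _ _ (by positivity) (fun b => ?_) hq'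
      rw [abs_mul, abs_of_pos (by positivity : (0 : ℝ) < (τ ^ (m + n))⁻¹)]
      exact mul_le_mul_of_nonneg_left (child_offset_le _) (by positivity)
    have h3 : τ ^ n * |W| ≤ n * y / 2 := by
      calc τ ^ n * |W| ≤ τ ^ n * (n * ((τ ^ (m + n))⁻¹ * (1 / 2)) * (y * τ ^ m)) := by gcongr
        _ = _ := by rw [pow_add]; field_simp
    have h4 : τ ^ n * |lin Y p q c + W| < y := by
      refine lt_of_le_of_lt ?_ (h1.trans_le ?_)
      · gcongr
        exact le_mul_of_one_le_left hτ0.le hκ1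
      · rw [hy]
        gcongr
        exact le_mul_of_one_le_right hn1.le (one_le_pow₀ hκ1)
    have h5 : τ ^ n * |lin Y p q c| ≤ τ ^ n * |lin Y p q c + W| + τ ^ n * |W| := by
      rw [← mul_add]
      gcongr
      have := abs_sub (lin Y p q c + W) W
      rwa [add_sub_cancel_right] at this
    have : 0 ≤ n * y := by positivity
    linarith
  · rw [mul_pow, ← mul_assoc]
    gcongr
    calc ((n + 1) * (κ : ℝ) ^ m * a)⁻¹ * κ ^ m = y := by rw [hy]; field_simp
      _ ≤ (n + 1) * y := le_mul_of_one_le_left hy0.le (by linarith)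
      _ = a⁻¹ := hay

/-- The centres of the children of the unit cube are `1 / (2 * k)`-dense in it. -/
theorem exists_child_close {m n k : ℕ} (hk : 0 < k) (x : Fin m → Fin n → ℝ)
    (hx : ∀ a b, |x a b| ≤ 1 / 2) : ∃ i : Fin m → Fin n → Fin k,
      ∀ a b, |x a b - (2 * ((i a b : ℕ) : ℝ) + 1 - k) / (2 * k)| ≤ 1 / (2 * k) := by
  have hk' : (1 : ℝ) ≤ k := by exact_mod_cast hk
  have hk0 : (0 : ℝ) < k := by linarith
  have key : ∀ y : ℝ, |y| ≤ 1 / 2 → ∃ j : Fin k, |y - (2 * ((j : ℕ) : ℝ) + 1 - k) / (2 * k)| ≤ 1 / (2 * k) := by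
    intro y hy
    obtain ⟨hy1, hy2⟩ := abs_le.1 hy
    have h0 : 0 ≤ k * (y + 1 / 2) := mul_nonneg hk0.le (by linarith)
    have red : ∀ j : ℝ, j ≤ k * (y + 1 / 2) → k * (y + 1 / 2) ≤ j + 1 →
        |y - (2 * j + 1 - k) / (2 * k)| ≤ 1 / (2 * k) := by
      intro j h1 h2
      have : y - (2 * j + 1 - k) / (2 * k) = (2 * (k * (y + 1 / 2)) - 2 * j - 1) / (2 * k) := by
        field_simp; ring
      rw [this, abs_div, abs_of_pos (by positivity : (0 : ℝ) < 2 * k)]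
      gcongr
      rw [abs_le]
      constructor <;> linarith
    rcases lt_or_ge (⌊k * (y + 1 / 2)⌋₊) k with h | h
    · exact ⟨⟨_, h⟩, red _ (Nat.floor_le h0) (Nat.lt_floor_add_one _).le⟩
    · refine ⟨⟨k - 1, by omega⟩, ?_⟩
      have h1 : (k : ℝ) ≤ k * (y + 1 / 2) := (Nat.cast_le.2 h).trans (Nat.floor_le h0)
      have h2 : k * (y + 1 / 2) ≤ k * 1 := by gcongr; linarith
      have h3 : ((k - 1 : ℕ) : ℝ) = k - 1 := by rw [Nat.cast_sub hk, Nat.cast_one]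
      apply red <;> simp only [h3] <;> linarith
  choose i hi using fun a b => key (x a b) (hx a b)
  exact ⟨i, hi⟩

theorem closedBall_subset_child {m n k : ℕ} (hk : 0 < k) (Y : Fin m → Fin n → ℝ) (r : ℝ) (hr : 0 < r) :
    Metric.closedBall Y (r / 2) ⊆ ⋃ i, Metric.closedBall (child Y r k i) (r / k / 2) := by
  intro X hX
  have hk0 : (0 : ℝ) < k := by exact_mod_cast hk
  obtain ⟨i, hi⟩ := exists_child_close hk (fun a b => (X a b - Y a b) / r) (fun a b => by
    rw [abs_div, abs_of_pos hr, div_le_iff₀ hr]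
    have h1 := (dist_le_pi_dist (X a) (Y a) b).trans ((dist_le_pi_dist X Y a).trans hX)
    rw [Real.dist_eq] at h1
    linarith)
  refine Set.mem_iUnion.2 ⟨i, ?_⟩
  rw [Metric.mem_closedBall, dist_pi_le_iff (by positivity)]
  intro a
  rw [dist_pi_le_iff (by positivity)]
  intro b
  have h2 := hi a b
  rw [Real.dist_eq]
  have h3 : X a b - child Y r k i a b =
      r * ((X a b - Y a b) / r - (2 * ((i a b : ℕ) : ℝ) + 1 - k) / (2 * k)) := by
    simp only [child, Pi.add_apply]
    field_simp
    ring
  rw [h3, abs_mul, abs_of_pos hr]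
  calc _ ≤ r * (1 / (2 * k)) := by gcongr
    _ = _ := by field_simp

/-! ### Splitting at bounded distortion -/

/-- The cube with centre `Y` and side `τ ^ (-(m + n))`, with distortion `a`, can be cut into cubes which
either consist of points violating the improved Dirichlet inequality at some time `τ' ≥ τ` or belong to
a family `S` with distortions `a'`, in such a way that the weights `side ^ (m * n - β * γ) * a ^ γ` of the
cubes in `S` add up to at most the weight of the original cube. -/
def Splits {m n : ℕ} (c β γ : ℝ) (Y : Fin m → Fin n → ℝ) (τ a : ℝ) : Prop :=
  ∃ κ : ℕ, 2 ≤ κ ∧ ∃ (S : Finset (Fin m → Fin n → Fin (κ ^ (m + n))))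
    (a' : (Fin m → Fin n → Fin (κ ^ (m + n))) → ℝ),
    (∀ i ∈ S, 1 ≤ a' i ∧
      Av (child Y (τ ^ (m + n))⁻¹ (κ ^ (m + n)) i) (κ * τ) (a' i)⁻¹ (a' i)⁻¹) ∧
    (∀ i ∉ S, ∀ X ∈ Metric.closedBall (child Y (τ ^ (m + n))⁻¹ (κ ^ (m + n)) i)
      ((τ ^ (m + n))⁻¹ / (κ ^ (m + n) : ℕ) / 2), ∃ τ', τ ≤ τ' ∧ Av X τ' c 1) ∧
    (∑ i ∈ S, a' i ^ γ) * ((κ ^ (m + n) : ℕ) : ℝ) ^ (β * γ) ≤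
      ((κ ^ (m + n) : ℕ) : ℝ) ^ (m * n) * a ^ γ

/-- A bounded factor `K ^ γ` is compensated by the loss of one child out of `N`. -/
theorem exists_exponent_le (K : ℝ) (hK : 1 ≤ K) (N : ℕ) (hN : 2 ≤ N) :
    ∃ γ₀ > 0, ∀ γ : ℝ, 0 < γ → γ ≤ γ₀ → ((N : ℝ) - 1) * K ^ γ ≤ N := by
  have hN' : (2 : ℝ) ≤ N := by exact_mod_cast hN
  have hlog : 0 ≤ Real.log K := Real.log_nonneg hK
  refine ⟨1 / (N * (Real.log K + 1)), by positivity, fun γ hγ0 hγ => ?_⟩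
  have h1 : Real.log K * γ ≤ 1 / N := by
    calc Real.log K * γ ≤ (Real.log K + 1) * (1 / (N * (Real.log K + 1))) := by
          gcongr; linarith
      _ = 1 / N := by field_simp
  have h2 := Real.add_one_le_exp (-(1 / (N : ℝ)))
  rw [Real.rpow_def_of_pos (by linarith)]
  calc ((N : ℝ) - 1) * Real.exp (Real.log K * γ) = N * (-(1 / (N : ℝ)) + 1) * Real.exp (Real.log K * γ) := by
        field_simp; ring
    _ ≤ N * Real.exp (-(1 / (N : ℝ))) * Real.exp (1 / N) := by gcongr
    _ = N := by rw [mul_assoc, ← Real.exp_add]; simp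

theorem card_index (m n k : ℕ) : Fintype.card (Fin m → Fin n → Fin k) = k ^ (m * n) := by
  simp [mul_comm m n, pow_mul]

/-- Points of bounded distortion split: at least one child is discarded. -/
theorem splits_of_le {m n : ℕ} (hm : 0 < m) (hn : 0 < n) (c : ℝ) (hc0 : 0 < c) (hc1 : c < 1)
    (β : ℝ) (hβ : 0 ≤ β) (h : ℝ) (hh : 1 ≤ h) :
    ∃ γ₀ > 0, ∀ γ : ℝ, 0 < γ → γ ≤ γ₀ → ∀ (Y : Fin m → Fin n → ℝ) (τ a : ℝ), 1 ≤ τ → 1 ≤ a → a ≤ h →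
      Av Y τ a⁻¹ a⁻¹ → Splits c β γ Y τ a := by
  obtain ⟨ε, hε, H⟩ := exists_ball_avoiding hm hn c hc0 hc1 h hh
  obtain ⟨κ, hκ⟩ := exists_nat_ge (max 2 ε⁻¹)
  have hκ2 : 2 ≤ κ := by exact_mod_cast (le_max_left _ _).trans hκ
  have hκ1 : (1 : ℝ) ≤ κ := by exact_mod_cast (show 1 ≤ κ by omega)
  set k := κ ^ (m + n) with hk
  have hk0 : 0 < k := by positivity
  have hkκ : (κ : ℝ) ≤ k := by
    rw [hk]; exact_mod_cast Nat.le_self_pow (by omega) κ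
  have hk1 : (1 : ℝ) ≤ k := hκ1.trans hkκ
  have hkε : 1 / (k : ℝ) ≤ ε := by
    rw [div_le_iff₀ (by linarith)]
    have h1 : ε⁻¹ ≤ k := (le_max_right _ _).trans (hκ.trans hkκ)
    rw [inv_le_iff_one_le_mul₀ hε] at h1
    linarith
  set C₁ : ℝ := (n + 1) * κ ^ m * h with hC₁
  have hC₁1 : 1 ≤ C₁ := by
    have : (0 : ℝ) ≤ n := Nat.cast_nonneg n
    exact one_le_mul_of_one_le_of_one_le (one_le_mul_of_one_le_of_one_le (by linarith)
      (one_le_pow₀ hκ1)) hh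
  have hkβ : 1 ≤ (k : ℝ) ^ β := Real.one_le_rpow hk1 hβ
  have hN : 2 ≤ k ^ (m * n) := by
    have h1 : 2 ≤ k := hκ2.trans (Nat.le_self_pow (by omega) κ)
    exact h1.trans (Nat.le_self_pow (by positivity) k)
  obtain ⟨γ₀, hγ₀, hγ⟩ := exists_exponent_le (C₁ * (k : ℝ) ^ β)
    (one_le_mul_of_one_le_of_one_le hC₁1 hkβ) _ hN
  refine ⟨γ₀, hγ₀, fun γ hγ0 hγ1 Y τ a hτ ha hah hY => ?_⟩
  have hτ0 : 0 < τ := by linarith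
  have hr : 0 < (τ ^ (m + n))⁻¹ := by positivity
  have hYh : Av Y τ h⁻¹ h⁻¹ := hY.mono hτ0.le (by gcongr) (by gcongr)
  obtain ⟨Z, hZ, hZ'⟩ := H Y τ hτ hYh
  obtain ⟨i₀, hi₀⟩ := exists_child_close hk0 Z fun a b => (hZ a b).trans (by norm_num)
  classical
  refine ⟨κ, hκ2, Finset.univ.erase i₀, fun _ => C₁, fun i _ => ⟨hC₁1, hYh.child hτ hh κ (by omega) i⟩,
    fun i hi X hX => ?_, ?_⟩
  · obtain rfl : i = i₀ := by simpa using hi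
    obtain ⟨τ', h1, h2⟩ := hZ' (fun a b => (X a b - Y a b) * τ ^ (m + n)) (fun a b => by
      have h1 := (dist_le_pi_dist (X a) _ b).trans ((dist_le_pi_dist X _ a).trans hX)
      rw [Real.dist_eq] at h1
      have h2 := hi₀ a b
      have h3 : |(X a b - Y a b) * τ ^ (m + n) - (2 * ((i a b : ℕ) : ℝ) + 1 - k) / (2 * k)| ≤
          1 / (2 * k) := by
        have h4 : (X a b - Y a b) * τ ^ (m + n) - (2 * ((i a b : ℕ) : ℝ) + 1 - k) / (2 * k) =
            (X a b - child Y (τ ^ (m + n))⁻¹ k i a b) * τ ^ (m + n) := by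
          simp only [child, Pi.add_apply]
          field_simp
          ring
        rw [h4, abs_mul, abs_of_pos (by positivity : 0 < τ ^ (m + n))]
        calc _ ≤ ((τ ^ (m + n))⁻¹ / k / 2) * τ ^ (m + n) := by gcongr
          _ = _ := by field_simp
      have h5 : 1 / (2 * (k : ℝ)) + 1 / (2 * k) = 1 / k := by field_simp; norm_num
      rw [abs_le] at h2 h3 ⊢
      constructor <;> linarith)
    refine ⟨τ', h1, ?_⟩
    have h3 : Y + (τ ^ (m + n))⁻¹ • (fun a b => (X a b - Y a b) * τ ^ (m + n)) = X := by
      ext a b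
      simp only [Pi.add_apply, Pi.smul_apply, smul_eq_mul]
      field_simp
      ring
    rwa [h3] at h2
  · rw [Finset.sum_const, Finset.card_erase_of_mem (Finset.mem_univ _), Finset.card_univ, card_index,
      nsmul_eq_mul, Nat.cast_sub (one_le_two.trans hN), Nat.cast_one, Real.rpow_mul (by positivity), mul_assoc,
      ← Real.mul_rpow (by positivity) (by positivity)]
    refine (hγ γ hγ0 hγ1).trans ?_
    rw [← hk, Nat.cast_pow]
    exact le_mul_of_one_le_right (by positivity) (Real.one_le_rpow ha hγ0.le)

/-! ### Splitting at large distortion -/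

/-- Strongly distorted points split: by `tail_bound`, almost all children are much less distorted
than their parent. -/
theorem splits_of_ge {m n : ℕ} (hm : 0 < m) (hn : 0 < n) (c : ℝ) :
    ∃ h : ℝ, 1 ≤ h ∧ ∃ β > 0, ∀ γ : ℝ, 0 < γ → γ ≤ 1 / 2 → ∀ (Y : Fin m → Fin n → ℝ) (τ a : ℝ),
      1 ≤ τ → h ≤ a → Av Y τ a⁻¹ a⁻¹ → Splits c β γ Y τ a := by
  obtain ⟨C₂, hC₂, e₂, C, hC, htail⟩ := tail_bound hm hn
  set e := e₂ + 1 with he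
  set M : ℝ := 1 + 2 * C with hM
  set d := m + n with hd
  have hd0 : (0 : ℝ) < d := by rw [hd]; exact_mod_cast (by omega)
  refine ⟨max (Real.exp (4 * M)) (2 * C₂), le_max_of_le_right (by linarith),
    1 / (2 * d * (e + 1)), by positivity, fun γ hγ0 hγ Y τ a hτ ha hY => ?_⟩
  have haM : Real.exp (4 * M) ≤ a := (le_max_left _ _).trans ha
  have haC : 2 * C₂ ≤ a := (le_max_right _ _).trans ha
  have ha2 : 2 ≤ a := by linarith
  have ha1 : 1 ≤ a := by linarith
  have ha0 : 0 < a := by linarith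
  have hτ0 : 0 < τ := by linarith
  set κ := ⌈C₂ * a ^ e⌉₊ with hκ
  have hκle : C₂ * a ^ e ≤ κ := Nat.le_ceil _
  have hae : 1 ≤ a ^ e := one_le_pow₀ ha1
  have hCa : 1 ≤ C₂ * a ^ e := one_le_mul_of_one_le_of_one_le hC₂ hae
  have hκge : (κ : ℝ) ≤ a ^ (e + 1) := by
    calc (κ : ℝ) ≤ C₂ * a ^ e + 1 := (Nat.ceil_lt_add_one (by linarith)).le
      _ ≤ (2 * C₂) * a ^ e := by linarith
      _ ≤ a * a ^ e := by gcongr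
      _ = _ := (pow_succ' a e).symm
  have hκ2R : (2 : ℝ) ≤ κ := by
    refine le_trans ?_ hκle
    have h1 : a ≤ a ^ e := le_self_pow₀ ha1 (by omega)
    have h2 : a ^ e ≤ C₂ * a ^ e := le_mul_of_one_le_left (by linarith) hC₂
    linarith
  have hκ2 : 2 ≤ κ := by exact_mod_cast hκ2R
  have htail' := fun u hu => htail Y τ a κ u hτ ha1 hY (le_trans (by
    gcongr
    omega) hκle) hu
  set k := κ ^ d with hk
  set N : ℝ := (k : ℝ) ^ (m * n) with hN
  have hN0 : 0 < N := by rw [hN, hk]; positivity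
  -- The distortion of a child is measured in powers of `4`.
  have hex : ∀ i : Fin m → Fin n → Fin k, ∃ j : ℕ,
      Av (child Y (τ ^ d)⁻¹ k i) (κ * τ) ((4 : ℝ) ^ j)⁻¹ ((4 : ℝ) ^ j)⁻¹ := by
    intro i
    obtain ⟨j, hj⟩ := pow_unbounded_of_one_lt ((n + 1) * (κ : ℝ) ^ m * a) (by norm_num : (1 : ℝ) < 4)
    have h1 := hY.child hτ ha1 κ (by omega) i
    exact ⟨j, h1.mono (by positivity) (by gcongr) (by gcongr)⟩
  classical
  set j : (Fin m → Fin n → Fin k) → ℕ := fun i => Nat.find (hex i) with hj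
  have hj1 : ∀ i, Av (child Y (τ ^ d)⁻¹ k i) (κ * τ) ((4 : ℝ) ^ j i)⁻¹ ((4 : ℝ) ^ j i)⁻¹ :=
    fun i => Nat.find_spec (hex i)
  have hj2 : ∀ l, ((Finset.univ.filter fun i => l < j i).card : ℝ) ≤ C * N / 4 ^ l := by
    intro l
    refine le_trans ?_ (htail' (4 ^ l) (one_le_pow₀ (by norm_num)))
    refine Nat.cast_le.2 (Finset.card_le_card fun i hi => ?_)
    exact Finset.mem_filter.2 ⟨Finset.mem_univ _, Nat.find_min (hex i) (Finset.mem_filter.1 hi).2⟩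
  obtain ⟨J, hJ⟩ : ∃ J, ∀ i, j i ≤ J :=
    ⟨Finset.univ.sup j, fun i => Finset.le_sup (Finset.mem_univ i)⟩
  have hcardN : ((Finset.univ : Finset (Fin m → Fin n → Fin k)).card : ℝ) = N := by
    rw [Finset.card_univ, card_index, hN, Nat.cast_pow]
  have hsum : ∑ i, (2 : ℝ) ^ j i ≤ M * N := by
    have h1 : ∀ i, (2 : ℝ) ^ j i = 1 + ∑ l ∈ Finset.range J, if l < j i then (2 : ℝ) ^ l else 0 := by
      intro i
      rw [← Finset.sum_filter]
      have : (Finset.range J).filter (fun l => l < j i) = Finset.range (j i) := by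
        ext l
        have := hJ i
        simp only [Finset.mem_filter, Finset.mem_range]
        omega
      rw [this, geom_sum_eq (by norm_num)]
      ring
    have h2 : ∀ l, ∑ i, (if l < j i then (2 : ℝ) ^ l else 0) ≤ C * N * (1 / 2) ^ l := by
      intro l
      rw [← Finset.sum_filter, Finset.sum_const, nsmul_eq_mul]
      calc _ ≤ C * N / 4 ^ l * 2 ^ l := by gcongr; exact hj2 l
        _ = C * N * (2 / 4) ^ l := by rw [div_pow]; ring
        _ = _ := by norm_num
    simp_rw [h1]
    rw [Finset.sum_add_distrib, Finset.sum_const, nsmul_eq_mul, hcardN, Finset.sum_comm]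
    have h3 : ∑ l ∈ Finset.range J, ((1 : ℝ) / 2) ^ l ≤ 2 := by
      exact sum_geometric_two_le J
    have hCN : 0 ≤ C * N := by positivity
    calc _ ≤ N * 1 + ∑ l ∈ Finset.range J, C * N * (1 / 2) ^ l := by
          gcongr with l
          exact h2 l
      _ ≤ N * 1 + C * N * 2 := by
          rw [← Finset.mul_sum]
          gcongr
      _ = _ := by rw [hM]; ring
  have hpow : ∑ i, ((4 : ℝ) ^ j i) ^ γ ≤ N * Real.exp (2 * γ * M) := by
    have h1 : ∀ i, ((4 : ℝ) ^ j i) ^ γ ≤ 1 + 2 * γ * ((2 : ℝ) ^ j i - 1) := by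
      intro i
      have h2 : ((4 : ℝ) ^ j i) ^ γ = (1 + ((2 : ℝ) ^ j i - 1)) ^ (2 * γ) := by
        rw [show (4 : ℝ) = 2 ^ 2 by norm_num, ← pow_mul, mul_comm 2 (j i), pow_mul, add_sub_cancel,
          Real.rpow_mul (by positivity), Real.rpow_two]
      rw [h2]
      have h3 : (0 : ℝ) < 2 ^ j i := by positivity
      exact rpow_one_add_le_one_add_mul_self (by linarith) (by linarith) (by linarith)
    calc _ ≤ ∑ i, (1 + 2 * γ * ((2 : ℝ) ^ j i - 1)) := Finset.sum_le_sum fun i _ => h1 i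
      _ = N * (1 - 2 * γ) + 2 * γ * ∑ i, (2 : ℝ) ^ j i := by
          rw [Finset.sum_add_distrib, ← Finset.mul_sum, Finset.sum_sub_distrib, Finset.sum_const,
            nsmul_eq_mul, hcardN]
          ring
      _ ≤ N * (1 - 2 * γ) + 2 * γ * (M * N) := by gcongr
      _ ≤ N * (2 * γ * M + 1) := by nlinarith
      _ ≤ _ := by gcongr; exact Real.add_one_le_exp _
  have hexp : Real.exp (2 * γ * M) ≤ a ^ (γ / 2) := by
    calc Real.exp (2 * γ * M) = Real.exp (4 * M) ^ (γ / 2) := by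
          rw [← Real.exp_mul]; ring_nf
      _ ≤ _ := Real.rpow_le_rpow (Real.exp_pos _).le haM (by linarith)
  have hgain : (k : ℝ) ^ (1 / (2 * d * (e + 1)) * γ) ≤ a ^ (γ / 2) := by
    have h1 : (k : ℝ) ≤ a ^ ((e + 1) * d) := by
      rw [hk, Nat.cast_pow, pow_mul]
      gcongr
    calc _ ≤ (a ^ ((e + 1) * d)) ^ (1 / (2 * d * (e + 1)) * γ) :=
          Real.rpow_le_rpow (by positivity) h1 (by positivity)
      _ = _ := by
          rw [← Real.rpow_natCast, ← Real.rpow_mul ha0.le]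
          congr 1
          push_cast
          field_simp
  refine ⟨κ, hκ2, Finset.univ, fun i => 4 ^ j i, fun i _ => ⟨one_le_pow₀ (by norm_num), hj1 i⟩,
    fun i hi => absurd (Finset.mem_univ i) hi, ?_⟩
  calc _ ≤ N * Real.exp (2 * γ * M) * a ^ (γ / 2) := by gcongr
    _ ≤ N * a ^ (γ / 2) * a ^ (γ / 2) := by gcongr
    _ = _ := by rw [mul_assoc, ← Real.rpow_add ha0, add_halves]

/-! ### The dimension bound -/

/-- The points for which the `c`-improved Dirichlet inequality is solvable at every time from `T` on. -/
def DIfrom (m n : ℕ) (c T : ℝ) : Set (Fin m → Fin n → ℝ) := {Y | ∀ τ, T ≤ τ → ¬ Av Y τ c 1}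

theorem ediam_closedBall_le {m n : ℕ} (Y : Fin m → Fin n → ℝ) (r : ℝ) :
    Metric.ediam (Metric.closedBall Y (r / 2)) ≤ ENNReal.ofReal r := by
  refine Metric.ediam_le_of_forall_dist_le fun x hx y hy => ?_
  have h1 := dist_triangle_right x y Y
  rw [Metric.mem_closedBall] at hx hy
  linarith

/-- Every point has distortion at most `τ ^ m` at time `τ`. -/
theorem av_of_pow_le {m n : ℕ} (Y : Fin m → Fin n → ℝ) (τ : ℝ) (hτ : 1 ≤ τ) :
    Av Y τ (τ ^ m)⁻¹ (τ ^ m)⁻¹ := by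
  have hτ0 : 0 < τ := by linarith
  have hone : ∀ z : ℤ, |(z : ℝ)| < 1 → z = 0 := fun z hz => by
    rw [← Int.abs_lt_one_iff]
    exact_mod_cast hz
  intro p q hp hq
  have hq0 : q = 0 := funext fun b => hone _ <| by
    have := hq b
    rwa [inv_mul_cancel₀ (by positivity)] at this
  refine ⟨funext fun a => hone _ ?_, hq0⟩
  have h1 := hp a
  have h2 : |lin Y p q a| = |(p a : ℝ)| := by simp [lin, hq0]
  rw [h2] at h1
  have h3 : |(p a : ℝ)| ≤ τ ^ n * |(p a : ℝ)| :=
    le_mul_of_one_le_left (abs_nonneg _) (one_le_pow₀ hτ)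
  exact (h3.trans_lt h1).trans_le (inv_le_one_of_one_le₀ (one_le_pow₀ hτ))

/-- Splitting at all levels of distortion bounds the dimension: every cube of side `T ^ (-(m + n))` is an
admissible start of the subdivision, and countably many of them cover the space. -/
theorem dimH_DIfrom_le {m n : ℕ} (hm : 0 < m) (hn : 0 < n) (c β γ : ℝ) (hγ : 0 ≤ γ)
    (hβγ : 0 ≤ (m * n : ℕ) - β * γ)
    (H : ∀ (Y : Fin m → Fin n → ℝ) (τ a : ℝ), 1 ≤ τ → 1 ≤ a → Av Y τ a⁻¹ a⁻¹ → Splits c β γ Y τ a)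
    (T : ℝ) (hT : 1 ≤ T) :
    dimH (DIfrom m n c T) ≤ ENNReal.ofReal ((m * n : ℕ) - β * γ) := by
  borelize (Fin m → Fin n → ℝ)
  set s : ℝ := (m * n : ℕ) - β * γ with hs
  set rad : (Fin m → Fin n → ℝ) × ℝ × ℝ → ℝ := fun t => (t.2.1 ^ (m + n))⁻¹ with hrad
  set V : (Fin m → Fin n → ℝ) × ℝ × ℝ → Prop :=
    fun t => T ≤ t.2.1 ∧ 1 ≤ t.2.2 ∧ Av t.1 t.2.1 t.2.2⁻¹ t.2.2⁻¹ with hV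
  set B : (Fin m → Fin n → ℝ) × ℝ × ℝ → Set (Fin m → Fin n → ℝ) :=
    fun t => Metric.closedBall t.1 (rad t / 2) with hB
  set w : (Fin m → Fin n → ℝ) × ℝ × ℝ → ℝ := fun t => rad t ^ s * t.2.2 ^ γ with hw
  have hrad0 : ∀ t, V t → 0 < rad t := fun t ht => by
    have : 0 < t.2.1 := by linarith [ht.1]
    simp only [hrad]
    positivity
  have hmeas : ∀ t, V t → MeasureTheory.Measure.hausdorffMeasure s (DIfrom m n c T ∩ B t) ≤
      ENNReal.ofReal (w t) := by
    refine hausdorffMeasure_le_of_subdivide s (DIfrom m n c T) V B w rad ?_ ?_ ?_ ?_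
    · intro t ht
      have h1 := (hrad0 t ht).le
      have h2 : 0 ≤ t.2.2 := by linarith [ht.2.1]
      simp only [hw]
      positivity
    · intro t ht
      have h1 := (hrad0 t ht).le
      calc _ ≤ ENNReal.ofReal (rad t) ^ s :=
            ENNReal.rpow_le_rpow (ediam_closedBall_le _ _) hβγ
        _ = ENNReal.ofReal (rad t ^ s) := ENNReal.ofReal_rpow_of_nonneg h1 hβγ
        _ ≤ _ := ENNReal.ofReal_le_ofReal
            (le_mul_of_one_le_right (by positivity) (Real.one_le_rpow ht.2.1 hγ))
    · exact fun t _ => ediam_closedBall_le _ _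
    · rintro ⟨Y, τ, a⟩ ⟨hτT, ha, hY⟩
      simp only at hτT ha hY
      have hτ : 1 ≤ τ := hT.trans hτT
      have hτ0 : 0 < τ := by linarith
      obtain ⟨κ, hκ2, hS⟩ := H Y τ a hτ ha hY
      have hκ2' : (2 : ℝ) ≤ κ := by exact_mod_cast hκ2
      set k := κ ^ (m + n) with hk
      obtain ⟨S, a', hS1, hS2, hS3⟩ := hS
      have hk2 : (2 : ℝ) ≤ k := by
        rw [hk]; push_cast
        exact hκ2'.trans (le_self_pow₀ (by linarith) (by omega))
      have hradc : ((κ * τ) ^ (m + n))⁻¹ = (τ ^ (m + n))⁻¹ / k := by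
        rw [hk, mul_pow, mul_inv]; push_cast; rw [div_eq_mul_inv, mul_comm]
      have hr0 : 0 < (τ ^ (m + n))⁻¹ := by positivity
      refine ⟨S, inferInstance, fun i => (child Y (τ ^ (m + n))⁻¹ k i, κ * τ, a' i), fun i => ?_,
        fun X hX => ?_, ?_, fun i => ?_⟩
      · obtain ⟨h1, h2⟩ := hS1 i i.2
        refine ⟨?_, h1, h2⟩
        show T ≤ κ * τ
        nlinarith
      · obtain ⟨i, hi⟩ := Set.mem_iUnion.1 (closedBall_subset_child (k := k) (by positivity) Y _ hr0 hX.2)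
        have hiS : i ∈ S := by
          by_contra hiS
          obtain ⟨τ', h1, h2⟩ := hS2 i hiS X hi
          exact hX.1 τ' (hτT.trans h1) h2
        refine Set.mem_iUnion.2 ⟨⟨i, hiS⟩, ?_⟩
        simp only [hB, hrad, hradc]
        exact hi
      · simp only [hw, hrad, hradc]
        rw [Finset.sum_coe_sort S fun i => ((τ ^ (m + n))⁻¹ / (k : ℝ)) ^ s * a' i ^ γ, ← Finset.mul_sum,
          Real.div_rpow hr0.le (by positivity), div_mul_eq_mul_div, div_le_iff₀ (by positivity), mul_assoc]
        gcongr
        have h1 : (k : ℝ) ^ (m * n) = (k : ℝ) ^ s * (k : ℝ) ^ (β * γ) := by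
          rw [← Real.rpow_add (by positivity), hs, sub_add_cancel, Real.rpow_natCast]
        rw [h1] at hS3
        have h2 : 0 < (k : ℝ) ^ (β * γ) := by positivity
        refine le_of_mul_le_mul_right (hS3.trans (le_of_eq ?_)) h2
        ring
      · simp only [hrad, hradc]
        gcongr
  have hball : ∀ Y : Fin m → Fin n → ℝ,
      dimH (DIfrom m n c T ∩ Metric.closedBall Y ((T ^ (m + n))⁻¹ / 2)) ≤ ENNReal.ofReal s := by
    intro Y
    refine dimH_le_of_hausdorffMeasure_ne_top (d := s.toNNReal) ?_
    rw [Real.coe_toNNReal _ hβγ]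
    exact ne_top_of_le_ne_top ENNReal.ofReal_ne_top
      (hmeas (Y, T, T ^ m) ⟨le_rfl, one_le_pow₀ hT, av_of_pow_le Y T hT⟩)
  have hcov : DIfrom m n c T ⊆ ⋃ l : ℕ, DIfrom m n c T ∩
      Metric.closedBall (TopologicalSpace.denseSeq (Fin m → Fin n → ℝ) l) ((T ^ (m + n))⁻¹ / 2) := by
    intro X hX
    obtain ⟨l, hx⟩ := (TopologicalSpace.denseRange_denseSeq (Fin m → Fin n → ℝ)).exists_dist_lt X
      (show 0 < (T ^ (m + n))⁻¹ / 2 by positivity)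
    exact Set.mem_iUnion.2 ⟨l, hX, hx.le⟩
  refine (dimH_mono hcov).trans ?_
  rw [dimH_iUnion]
  exact iSup_le fun l => hball _

theorem DIone_subset {m n : ℕ} (hm : 0 < m) (c : ℝ) :
    DIone m n c ⊆ ⋃ l : ℕ, DIfrom m n c (l + 1) := by
  rintro Y ⟨N₀, hN₀, hY⟩
  obtain ⟨l, hl⟩ := exists_nat_ge N₀
  refine Set.mem_iUnion.2 ⟨l, fun τ hτ h => ?_⟩
  have hl0 : (0 : ℝ) ≤ l := Nat.cast_nonneg l
  have hτ1 : 1 ≤ τ := by linarith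
  have hτ0 : 0 < τ := by linarith
  obtain ⟨p, q, h1, h2, h3⟩ := hY (τ ^ m) (by
    have : τ ≤ τ ^ m := le_self_pow₀ hτ1 hm.ne'
    linarith)
  have hpow : (τ ^ m) ^ (-(n : ℝ) / (m : ℝ)) = (τ ^ n)⁻¹ := by
    rw [← Real.rpow_natCast, ← Real.rpow_mul hτ0.le, mul_div_cancel₀ _ (by positivity),
      Real.rpow_neg hτ0.le, Real.rpow_natCast]
  rw [hpow] at h1
  obtain ⟨-, rfl⟩ := h p q (fun a => by
    have h4 := (norm_le_pi_norm (fun a : Fin m => (∑ b : Fin n, Y a b * (q b : ℝ)) - (p a : ℝ)) a).trans_lt h1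
    rw [Real.norm_eq_abs] at h4
    calc τ ^ n * |lin Y p q a| < τ ^ n * (c * (τ ^ n)⁻¹) := by gcongr; exact h4
      _ = c := by field_simp) (fun b => by
    rw [one_mul]
    exact (norm_le_pi_norm (fun b : Fin n => (q b : ℝ)) b).trans_lt h3)
  refine h2.ne' ?_
  rw [norm_eq_zero]
  ext b
  simp

/-- The Hausdorff dimension of the set of `c`-Dirichlet improvable `m × n` matrices
is strictly smaller than `m * n`, for every `0 < c < 1`. -/
theorem dimH_DIone_lt (m n : ℕ) (hm : 0 < m) (hn : 0 < n)
    (c : ℝ) (hc0 : 0 < c) (hc1 : c < 1) :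
    dimH (DIone m n c) < ((m * n : ℕ) : ℝ≥0∞) := by
  obtain ⟨h, hh, β, hβ, hdeep⟩ := splits_of_ge hm hn c
  obtain ⟨γ₀, hγ₀, hshallow⟩ := splits_of_le hm hn c hc0 hc1 β hβ.le h hh
  set γ := min γ₀ (min (1 / 2) (1 / β)) with hγ
  have hγ0 : 0 < γ := lt_min hγ₀ (lt_min (by norm_num) (by positivity))
  have hγ1 : γ ≤ γ₀ := min_le_left _ _
  have hγ2 : γ ≤ 1 / 2 := (min_le_right _ _).trans (min_le_left _ _)
  have hγ3 : γ ≤ 1 / β := (min_le_right _ _).trans (min_le_right _ _)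
  have hβγ1 : β * γ ≤ 1 := by
    rw [le_div_iff₀ hβ] at hγ3
    linarith
  have hmn : (1 : ℝ) ≤ (m * n : ℕ) := by exact_mod_cast Nat.mul_pos hm hn
  have hs : 0 ≤ ((m * n : ℕ) : ℝ) - β * γ := by linarith
  have hle : dimH (DIone m n c) ≤ ENNReal.ofReal ((m * n : ℕ) - β * γ) := by
    refine (dimH_mono (DIone_subset hm c)).trans ?_
    rw [dimH_iUnion]
    refine iSup_le fun l => dimH_DIfrom_le hm hn c β γ hγ0.le hs (fun Y τ a hτ ha hY => ?_) _ (by simp)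
    rcases le_total a h with hah | hah
    · exact hshallow γ hγ0 hγ1 Y τ a hτ ha hah hY
    · exact hdeep γ hγ0 hγ2 Y τ a hτ hah hY
  refine hle.trans_lt ?_
  rw [← ENNReal.ofReal_natCast]
  exact (ENNReal.ofReal_lt_ofReal_iff (by linarith)).2 (by
    have : 0 < β * γ := by positivity
    linarith)
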